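/- arXiv:1803.00495 — 3 statements merged into one kernel-verified Lean document; each statement's English description precedes it below -/
import Mathlib

section
/- Let t_0 be a nonzero real number and set s_0 = 1 + 2it_0. Then ζ'(s)/ζ(s) is analytic at s_0, and for every integer n ≥ 0 its n-th Taylor coefficient C_{n,s_0} at s_0 (i.e., the coefficient of (s − s_0)^n in the expansion ζ'(s)/ζ(s) = Σ_{n≥0} C_{n,s_0}(s − s_0)^n) satisfies |C_{n,s_0}| ≤ A_n ( |t_0|^{−(n+1)} + (log(|t_0| + 2))^{n+1} ), where A_n > 0 is a constant depending only on n. -/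
open Complex

/-!
On a disc of fixed radius centred at `17/16 + it`, the continuation
`ζ(s) = s / (s - 1) - s ∫₁^∞ {u} u^(-s-1) du` gives `ζ(s) ≪ |t|`, while the Dirichlet series of
`1/ζ` bounds `ζ` from below at the centre. Dividing out the zeros `ρ` in the disc and applying the
Borel–Carathéodory theorem to a logarithm of the cofactor yields Landau's approximation
`ζ'/ζ(s) = ∑ 1/(s - ρ) + O(log |t|)`. Together with the positivity of `3 + 4 cos θ + cos 2θ` this
excludes zeros within a distance `≍ 1 / log |t|` of the line `Re s = 1`.

To bound `ζ'/ζ` itself near `1 + it`, compare a point `z` with a point `s` slightly to the right of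
the line, where `|ζ'/ζ(s)| ≤ -ζ'/ζ(Re s) ≪ log |t|`. As soon as `2 |z - s| ≤ Re (s - ρ)` one has
`|1/(z - ρ) - 1/(s - ρ)| ≤ Re (1/(s - ρ))`, and the sum of the right-hand sides is controlled by
`ζ'/ζ(s)`. Hence `ζ'/ζ ≪ log |t|` on a disc of radius `≍ 1 / log |t|` about `1 + it`, and Cauchy's
estimate bounds the Taylor coefficients for large `|t|`. For bounded `|t|`, the pole `-1/(s - 1)`
accounts for the power of `1/|t|` and the rest of `ζ'/ζ` is continuous along the line.
-/

open Metric Set Filter Topology MeasureTheory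

section ComplexAnalysis

variable {f g : ℂ → ℂ} {c : ℂ} {r L : ℝ}

lemma norm_deriv_le_of_forall_ball_re_sub_le (hf : DifferentiableOn ℂ f (ball c r)) (hL : 0 < L)
    (hre : ∀ z ∈ ball c r, (f z - f c).re ≤ L) {z : ℂ} (hr : 0 < r)
    (hz : z ∈ closedBall c (r / 2)) :
    ‖deriv f z‖ ≤ 24 * L / r := by
  have hbound : ∀ w ∈ closedBall c (3 * r / 4), ‖f w - f c‖ ≤ 6 * L := by
    intro w hw
    rw [mem_closedBall_iff_norm] at hw
    have hcw : ∀ u ∈ ball (0 : ℂ) r, c + u ∈ ball c r := by simp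
    have key := borelCaratheodory_zero (f := fun u ↦ f (c + u) - f c) (z := w - c) hL
      ((hf.comp (by fun_prop) hcw).sub_const _) (fun u hu ↦ hre _ (hcw u hu)) hr
      (by rw [mem_ball_zero_iff]; linarith) (by simp)
    rw [add_sub_cancel] at key
    refine key.trans ?_
    rw [div_le_iff₀ (by linarith)]
    nlinarith
  rw [mem_closedBall] at hz
  have hsub : closedBall z (r / 4) ⊆ closedBall c (3 * r / 4) :=
    closedBall_subset_closedBall' (by linarith)
  have hdiff : DiffContOnCl ℂ (fun w ↦ f w - f c) (ball z (r / 4)) :=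
    (hf.sub_const _).diffContOnCl_ball <|
      hsub.trans (closedBall_subset_ball (by linarith))
  have key := norm_deriv_le_of_forall_mem_sphere_norm_le (by positivity) hdiff
    fun w hw ↦ hbound w (hsub (sphere_subset_closedBall hw))
  rw [deriv_sub_const] at key
  exact key.trans_eq (by field)

lemma exists_hasDerivAt_logDeriv_and_eq_mul_exp (hg : DifferentiableOn ℂ g (ball c r))
    (h0 : ∀ z ∈ ball c r, g z ≠ 0) :
    ∃ h : ℂ → ℂ, h c = 0 ∧
      ∀ z ∈ ball c r, HasDerivAt h (logDeriv g z) z ∧ g z = g c * exp (h z) := by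
  have hlog : DifferentiableOn ℂ (logDeriv g) (ball c r) := (hg.deriv isOpen_ball).div hg h0
  obtain ⟨h, hhc, hh⟩ := hlog.isExactOn_ball.with_val_at c 0
  have hexp : DifferentiableOn ℂ (fun z ↦ exp (h z)) (ball c r) :=
    fun z hz ↦ (hh z hz).cexp.differentiableAt.differentiableWithinAt
  obtain ⟨k, -, hk⟩ := (logDeriv_eqOn_iff hg hexp isOpen_ball (convex_ball c r).isPreconnected
    (fun z _ ↦ exp_ne_zero _) h0).1 fun z hz ↦ by
      rw [logDeriv_apply (fun z ↦ exp (h z)), (hh z hz).cexp.deriv,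
        mul_div_cancel_left₀ _ (exp_ne_zero _)]
  refine ⟨h, hhc, fun z hz ↦ ⟨hh z hz, ?_⟩⟩
  have hkc : g c = k := by simpa [hhc] using hk (mem_ball_self (pos_of_mem_ball hz))
  simpa [hkc] using hk hz

lemma norm_logDeriv_le_of_forall_ball_ne_zero (hg : DifferentiableOn ℂ g (ball c r))
    (h0 : ∀ z ∈ ball c r, g z ≠ 0) (hL : 0 < L)
    (hbound : ∀ z ∈ ball c r, ‖g z‖ ≤ Real.exp L * ‖g c‖) {z : ℂ} (hr : 0 < r)
    (hz : z ∈ closedBall c (r / 2)) :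
    ‖logDeriv g z‖ ≤ 24 * L / r := by
  obtain ⟨h, hhc, hh⟩ := exists_hasDerivAt_logDeriv_and_eq_mul_exp hg h0
  rw [← (hh z (closedBall_subset_ball (by linarith) hz)).1.deriv]
  refine norm_deriv_le_of_forall_ball_re_sub_le
    (fun w hw ↦ (hh w hw).1.differentiableAt.differentiableWithinAt) hL (fun w hw ↦ ?_) hr hz
  have hgw := hbound w hw
  rw [(hh w hw).2, norm_mul, mul_comm, norm_exp,
    mul_le_mul_iff_of_pos_right (norm_pos_iff.2 (h0 c (mem_ball_self hr)))] at hgw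
  simpa [hhc] using Real.exp_le_exp.1 hgw

lemma finite_setOf_mem_closedBall_and_eq_zero {R : ℝ} (hf : AnalyticOnNhd ℂ f (closedBall c R))
    (hc : f c ≠ 0) (hrR : r ≤ R) : {z | z ∈ closedBall c r ∧ f z = 0}.Finite := by
  rcases lt_or_ge r 0 with hr | hr
  · simp [closedBall_eq_empty.2 hr]
  have hcod := (hf.mono (closedBall_subset_closedBall hrR)).preimage_zero_mem_codiscreteWithin hc
    (mem_closedBall_self hr) ((convex_closedBall c r).isConnected ⟨c, mem_closedBall_self hr⟩)
  refine ((isCompact_closedBall c r).finite_sdiff_of_mem_codiscreteWithin hcod).subset ?_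
  intro z hz
  simpa using hz

lemma analyticOrderAt_ne_top_of_mem_closedBall {R : ℝ} (hf : AnalyticOnNhd ℂ f (closedBall c R))
    (hc : f c ≠ 0) {z : ℂ} (hz : z ∈ closedBall c R) : analyticOrderAt f z ≠ ⊤ := by
  have hcR : c ∈ closedBall c R := mem_closedBall_self (dist_nonneg.trans hz)
  refine hf.analyticOrderAt_ne_top_of_isPreconnected (convex_closedBall c R).isPreconnected
    hcR hz ?_
  rw [(hf c hcR).analyticOrderAt_eq_zero.2 hc]
  exact ENat.zero_ne_top

lemma exists_analyticOnNhd_eq_pow_mul {U : Set ℂ} (hf : AnalyticOnNhd ℂ f U) {ρ : ℂ}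
    (hρ : ρ ∈ U) (htop : analyticOrderAt f ρ ≠ ⊤) :
    ∃ g : ℂ → ℂ, AnalyticOnNhd ℂ g U ∧ g ρ ≠ 0 ∧
      ∀ z, f z = (z - ρ) ^ analyticOrderNatAt f ρ * g z := by
  classical
  set m := analyticOrderNatAt f ρ
  obtain ⟨g₀, hg₀, hg₀ρ, hfg₀⟩ := (hf ρ hρ).analyticOrderAt_ne_top.1 htop
  set g := Function.update (fun z ↦ f z / (z - ρ) ^ m) ρ (g₀ ρ) with hg
  have hg_of_ne {z : ℂ} (hz : z ≠ ρ) : g z = f z / (z - ρ) ^ m := Function.update_of_ne hz ..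
  have hgρ : g ρ = g₀ ρ := Function.update_self ..
  have hgg₀ : g =ᶠ[𝓝 ρ] g₀ := by
    filter_upwards [hfg₀] with z hz
    rcases eq_or_ne z ρ with rfl | hne
    · exact hgρ
    · rw [hg_of_ne hne, hz, smul_eq_mul,
        mul_div_cancel_left₀ _ (pow_ne_zero _ (sub_ne_zero.2 hne))]
  refine ⟨g, fun z hz ↦ ?_, hgρ ▸ hg₀ρ, fun z ↦ ?_⟩
  · rcases eq_or_ne z ρ with rfl | hne
    · exact hg₀.congr hgg₀.symm
    · have hquot : AnalyticAt ℂ (fun w ↦ f w / (w - ρ) ^ m) z :=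
        (hf z hz).fun_div (by fun_prop) (pow_ne_zero m (sub_ne_zero.2 hne))
      refine hquot.congr ?_
      filter_upwards [isOpen_ne.mem_nhds hne] with w hw
      exact (hg_of_ne hw).symm
  · rcases eq_or_ne z ρ with rfl | hne
    · rw [hgρ]
      exact hfg₀.self_of_nhds
    · rw [hg_of_ne hne, mul_div_cancel₀ _ (pow_ne_zero _ (sub_ne_zero.2 hne))]

lemma exists_analyticOnNhd_eq_prod_pow_mul {U : Set ℂ} (hf : AnalyticOnNhd ℂ f U)
    (htop : ∀ ρ ∈ U, analyticOrderAt f ρ ≠ ⊤) (S : Finset ℂ) (hS : ↑S ⊆ U) :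
    ∃ g : ℂ → ℂ, AnalyticOnNhd ℂ g U ∧ (∀ ρ ∈ S, g ρ ≠ 0) ∧
      ∀ z, f z = (∏ ρ ∈ S, (z - ρ) ^ analyticOrderNatAt f ρ) * g z := by
  classical
  induction S using Finset.induction_on with
  | empty => exact ⟨f, hf, by simp, by simp⟩
  | insert a S ha ih =>
    rw [Finset.coe_insert, Set.insert_subset_iff] at hS
    obtain ⟨g, hg, hgS, hfg⟩ := ih hS.2
    have horder : analyticOrderAt f a = analyticOrderAt g a := by
      have hprod : AnalyticAt ℂ (fun z ↦ ∏ ρ ∈ S, (z - ρ) ^ analyticOrderNatAt f ρ) a := by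
        fun_prop
      have hprod0 : analyticOrderAt (fun z ↦ ∏ ρ ∈ S, (z - ρ) ^ analyticOrderNatAt f ρ) a = 0 := by
        refine hprod.analyticOrderAt_eq_zero.2 (Finset.prod_ne_zero_iff.2 fun ρ hρ ↦ ?_)
        exact pow_ne_zero _ (sub_ne_zero.2 fun h ↦ ha (h ▸ hρ))
      rw [funext hfg]
      refine (analyticOrderAt_mul hprod (hg a hS.1)).trans ?_
      rw [hprod0, zero_add]
    obtain ⟨g₁, hg₁, hg₁a, hgg₁⟩ :=
      exists_analyticOnNhd_eq_pow_mul hg hS.1 (horder ▸ htop a hS.1)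
    refine ⟨g₁, hg₁, ?_, fun z ↦ ?_⟩
    · rw [Finset.forall_mem_insert]
      exact ⟨hg₁a, fun ρ hρ h ↦ hgS ρ hρ (by rw [hgg₁, h, mul_zero])⟩
    · have hnat : analyticOrderNatAt f a = analyticOrderNatAt g a := congrArg ENat.toNat horder
      rw [Finset.prod_insert ha, hfg, hgg₁, hnat]
      ring

lemma logDeriv_prod_sub_pow (S : Finset ℂ) (m : ℂ → ℕ) {z : ℂ} (hz : z ∉ S) :
    logDeriv (fun z ↦ ∏ ρ ∈ S, (z - ρ) ^ m ρ) z = ∑ ρ ∈ S, (m ρ : ℂ) / (z - ρ) := by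
  have hne : ∀ ρ ∈ S, (z - ρ) ^ m ρ ≠ 0 := fun ρ hρ ↦
    pow_ne_zero _ (sub_ne_zero.2 (ne_of_mem_of_not_mem hρ hz).symm)
  rw [logDeriv_prod hne (by fun_prop)]
  refine Finset.sum_congr rfl fun ρ _ ↦ ?_
  rw [logDeriv_fun_pow (by fun_prop), logDeriv_apply, deriv_sub_const, deriv_id'', mul_one_div]

lemma norm_cofactor_le_of_mem_sphere {S : Finset ℂ} {m : ℂ → ℕ} {M R : ℝ}
    (hS : ↑S ⊆ closedBall c (R / 2)) (hfg : ∀ z, f z = (∏ ρ ∈ S, (z - ρ) ^ m ρ) * g z)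
    (hc : f c ≠ 0) {z : ℂ} (hz : z ∈ sphere c R) (hfz : ‖f z‖ ≤ M * ‖f c‖) :
    ‖g z‖ ≤ M * ‖g c‖ := by
  have hle : ‖∏ ρ ∈ S, (c - ρ) ^ m ρ‖ ≤ ‖∏ ρ ∈ S, (z - ρ) ^ m ρ‖ := by
    simp only [norm_prod, norm_pow, ← dist_eq_norm]
    gcongr with ρ hρ
    have hρc := mem_closedBall.1 (hS hρ)
    have hzc := mem_sphere.1 hz
    rw [dist_comm c ρ]
    linarith [dist_triangle z ρ c]
  have hpos : 0 < ‖∏ ρ ∈ S, (c - ρ) ^ m ρ‖ :=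
    norm_pos_iff.2 (left_ne_zero_of_mul (hfg c ▸ hc))
  refine le_of_mul_le_mul_left ?_ hpos
  calc ‖∏ ρ ∈ S, (c - ρ) ^ m ρ‖ * ‖g z‖ ≤ ‖∏ ρ ∈ S, (z - ρ) ^ m ρ‖ * ‖g z‖ := by gcongr
    _ = ‖f z‖ := by rw [hfg, norm_mul]
    _ ≤ M * ‖f c‖ := hfz
    _ = ‖∏ ρ ∈ S, (c - ρ) ^ m ρ‖ * (M * ‖g c‖) := by rw [hfg, norm_mul]; ring

end ComplexAnalysis

section LocalZeros

variable {f : ℂ → ℂ} {c : ℂ} {R L : ℝ}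

theorem norm_logDeriv_sub_sum_le (hf : AnalyticOnNhd ℂ f (closedBall c R)) (hR : 0 < R)
    (hL : 0 < L) (hc : f c ≠ 0) (hbound : ∀ z ∈ sphere c R, ‖f z‖ ≤ Real.exp L * ‖f c‖)
    {S : Finset ℂ} (hS : ∀ ρ, ρ ∈ S ↔ ρ ∈ closedBall c (R / 2) ∧ f ρ = 0) {z : ℂ}
    (hz : z ∈ closedBall c (R / 4)) (hfz : f z ≠ 0) :
    ‖logDeriv f z - ∑ ρ ∈ S, (analyticOrderNatAt f ρ : ℂ) / (z - ρ)‖ ≤ 48 * L / R := by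
  have hhalf : closedBall c (R / 2) ⊆ closedBall c R := closedBall_subset_closedBall (by linarith)
  have hSball : ↑S ⊆ closedBall c (R / 2) := fun ρ hρ ↦ ((hS ρ).1 hρ).1
  obtain ⟨g, hg, hgS, hfg⟩ :=
    exists_analyticOnNhd_eq_prod_pow_mul hf
      (fun _ ↦ analyticOrderAt_ne_top_of_mem_closedBall hf hc) S (hSball.trans hhalf)
  have hg0 : ∀ w ∈ closedBall c (R / 2), g w ≠ 0 := fun w hw h ↦
    hgS w ((hS w).2 ⟨hw, by rw [hfg, h, mul_zero]⟩) h
  have hgbound : ∀ w ∈ ball c (R / 2), ‖g w‖ ≤ Real.exp L * ‖g c‖ := by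
    intro w hw
    refine norm_le_of_forall_mem_frontier_norm_le isBounded_ball
      (hg.differentiableOn.diffContOnCl_ball subset_rfl) (fun u hu ↦ ?_)
      (subset_closure (ball_subset_ball (by linarith) hw))
    rw [frontier_ball c hR.ne'] at hu
    exact norm_cofactor_le_of_mem_sphere hSball hfg hc hu (hbound u hu)
  have hzhalf : z ∈ closedBall c (R / 2) := closedBall_subset_closedBall (by linarith) hz
  have hlog : logDeriv f z - ∑ ρ ∈ S, (analyticOrderNatAt f ρ : ℂ) / (z - ρ) = logDeriv g z := by
    have hzS : z ∉ S := fun h ↦ hfz ((hS z).1 h).2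
    have hmul := logDeriv_mul (f := fun z ↦ ∏ ρ ∈ S, (z - ρ) ^ analyticOrderNatAt f ρ) (g := g) z
      (left_ne_zero_of_mul (hfg z ▸ hfz)) (hg0 z hzhalf) (by fun_prop)
      (hg z (hhalf hzhalf)).differentiableAt
    rw [logDeriv_prod_sub_pow S _ hzS, ← funext hfg] at hmul
    rw [hmul, add_sub_cancel_left]
  rw [hlog]
  refine (norm_logDeriv_le_of_forall_ball_ne_zero (r := R / 2) (L := L)
    (hg.differentiableOn.mono (ball_subset_closedBall.trans hhalf))
    (fun w hw ↦ hg0 w (ball_subset_closedBall hw)) hL hgbound (by positivity) ?_).trans_eq (by ring)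
  convert hz using 2
  ring

lemma inv_re_nonneg {z : ℂ} (hz : 0 ≤ z.re) : 0 ≤ (z⁻¹).re := by
  rw [inv_re]
  exact div_nonneg hz (normSq_nonneg z)

lemma norm_inv_sub_inv_le_re_inv {v w : ℂ} (h : ‖v - w‖ ≤ v.re / 2) : ‖w⁻¹ - v⁻¹‖ ≤ (v⁻¹).re := by
  rcases eq_or_ne v 0 with rfl | hv
  · obtain rfl : w = 0 := by simpa using h
    simp
  have hvpos : 0 < ‖v‖ := norm_pos_iff.2 hv
  have hvw : ‖v‖ / 2 ≤ ‖w‖ := by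
    linarith [norm_sub_norm_le v w, re_le_norm v]
  have hw : w ≠ 0 := norm_pos_iff.1 (by linarith)
  rw [inv_sub_inv hw hv, norm_div, norm_mul, inv_re, normSq_eq_norm_sq, div_le_div_iff₀
    (by positivity) (by positivity)]
  calc ‖v - w‖ * ‖v‖ ^ 2 ≤ v.re / 2 * ‖v‖ ^ 2 := by gcongr
    _ = v.re * (‖v‖ / 2 * ‖v‖) := by ring
    _ ≤ v.re * (‖w‖ * ‖v‖) := by
      have : 0 ≤ v.re := by linarith [norm_nonneg (v - w)]
      gcongr

lemma re_natCast_div (m : ℕ) (z : ℂ) : ((m : ℂ) / z).re = m * (z⁻¹).re := by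
  simp [div_eq_mul_inv]

lemma neg_re_le_sub_re_inv_of_norm_sub_sum_le {S : Finset ℂ} {m : ℂ → ℕ} {w z ρ₀ : ℂ} {B : ℝ}
    (hw : ‖w - ∑ ρ ∈ S, (m ρ : ℂ) / (z - ρ)‖ ≤ B) (hre : ∀ ρ ∈ S, ρ.re ≤ z.re) (hρ₀ : ρ₀ ∈ S)
    (hm : 1 ≤ m ρ₀) :
    -w.re ≤ B - ((z - ρ₀)⁻¹).re := by
  have hterm : ∀ ρ ∈ S, 0 ≤ ((z - ρ)⁻¹).re := fun ρ hρ ↦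
    inv_re_nonneg (by simpa using hre ρ hρ)
  have hsum : ((z - ρ₀)⁻¹).re ≤ (∑ ρ ∈ S, (m ρ : ℂ) / (z - ρ)).re := by
    simp only [re_sum, re_natCast_div]
    refine le_trans ?_ (Finset.single_le_sum
      (fun ρ hρ ↦ mul_nonneg (Nat.cast_nonneg (m ρ)) (hterm ρ hρ)) hρ₀)
    exact le_mul_of_one_le_left (hterm ρ₀ hρ₀) (mod_cast hm)
  have := (abs_le.1 ((abs_re_le_norm _).trans hw)).1
  rw [sub_re] at this
  linarith

lemma neg_re_le_of_norm_sub_sum_le {S : Finset ℂ} {m : ℂ → ℕ} {w z : ℂ} {B : ℝ}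
    (hw : ‖w - ∑ ρ ∈ S, (m ρ : ℂ) / (z - ρ)‖ ≤ B) (hre : ∀ ρ ∈ S, ρ.re ≤ z.re) :
    -w.re ≤ B := by
  have hsum : 0 ≤ (∑ ρ ∈ S, (m ρ : ℂ) / (z - ρ)).re := by
    simp only [re_sum, re_natCast_div]
    exact Finset.sum_nonneg fun ρ hρ ↦
      mul_nonneg (Nat.cast_nonneg _) (inv_re_nonneg (by simpa using hre ρ hρ))
  have := (abs_le.1 ((abs_re_le_norm _).trans hw)).1
  rw [sub_re] at this
  linarith

lemma norm_le_of_norm_sub_sum_le {S : Finset ℂ} {m : ℂ → ℕ} {v w s z : ℂ} {B : ℝ}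
    (hv : ‖v - ∑ ρ ∈ S, (m ρ : ℂ) / (s - ρ)‖ ≤ B) (hw : ‖w - ∑ ρ ∈ S, (m ρ : ℂ) / (z - ρ)‖ ≤ B)
    (hsep : ∀ ρ ∈ S, 2 * ‖z - s‖ ≤ s.re - ρ.re) :
    ‖w‖ ≤ 2 * ‖v‖ + 3 * B := by
  set Ps := ∑ ρ ∈ S, (m ρ : ℂ) / (s - ρ)
  set Pz := ∑ ρ ∈ S, (m ρ : ℂ) / (z - ρ)
  have hdiff : ‖Pz - Ps‖ ≤ ‖Ps‖ := by
    calc ‖Pz - Ps‖ ≤ ∑ ρ ∈ S, m ρ * ((s - ρ)⁻¹).re := by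
          rw [← Finset.sum_sub_distrib]
          refine norm_sum_le_of_le _ fun ρ hρ ↦ ?_
          rw [div_eq_mul_inv, div_eq_mul_inv, ← mul_sub, norm_mul, norm_natCast]
          gcongr
          refine norm_inv_sub_inv_le_re_inv ?_
          rw [sub_sub_sub_cancel_right, sub_re, norm_sub_rev]
          linarith [hsep ρ hρ]
      _ = Ps.re := by simp only [Ps, re_sum, re_natCast_div]
      _ ≤ ‖Ps‖ := re_le_norm Ps
  have hPs : ‖Ps‖ ≤ ‖v‖ + B := by
    linarith [norm_sub_norm_le Ps v, norm_sub_rev v Ps]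
  calc ‖w‖ = ‖(w - Pz) + (Pz - Ps) + Ps‖ := by ring_nf
    _ ≤ ‖w - Pz‖ + ‖Pz - Ps‖ + ‖Ps‖ := norm_add₃_le
    _ ≤ 2 * ‖v‖ + 3 * B := by linarith

lemma ne_zero_of_two_mul_norm_sub_le {s z : ℂ} (hs : f s ≠ 0)
    (hsep : f z = 0 → 2 * ‖z - s‖ ≤ s.re - z.re) : f z ≠ 0 := by
  intro hz
  have hle : s.re - z.re ≤ ‖z - s‖ := by
    rw [← sub_re, norm_sub_rev]
    exact re_le_norm _
  have : ‖z - s‖ = 0 := by linarith [hsep hz, norm_nonneg (z - s)]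
  exact hs (by rwa [← sub_eq_zero.1 (norm_eq_zero.1 this)])

lemma exists_finset_mem_iff_mem_closedBall_and_eq_zero (hf : AnalyticOnNhd ℂ f (closedBall c R))
    (hR : 0 < R) (hc : f c ≠ 0) :
    ∃ S : Finset ℂ, ∀ ρ, ρ ∈ S ↔ ρ ∈ closedBall c (R / 2) ∧ f ρ = 0 := by
  have hfin := finite_setOf_mem_closedBall_and_eq_zero hf hc (half_le_self hR.le)
  exact ⟨hfin.toFinset, fun ρ ↦ by simp⟩

theorem neg_re_logDeriv_le (hf : AnalyticOnNhd ℂ f (closedBall c R)) (hR : 0 < R)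
    (hL : 0 < L) (hc : f c ≠ 0) (hbound : ∀ z ∈ sphere c R, ‖f z‖ ≤ Real.exp L * ‖f c‖) {z : ℂ}
    (hz : z ∈ closedBall c (R / 4)) (hfz : f z ≠ 0)
    (hre : ∀ ρ ∈ closedBall c (R / 2), f ρ = 0 → ρ.re ≤ z.re) :
    -(logDeriv f z).re ≤ 48 * L / R := by
  obtain ⟨S, hS⟩ := exists_finset_mem_iff_mem_closedBall_and_eq_zero hf hR hc
  exact neg_re_le_of_norm_sub_sum_le (norm_logDeriv_sub_sum_le hf hR hL hc hbound hS hz hfz)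
    fun ρ hρ ↦ hre ρ ((hS ρ).1 hρ).1 ((hS ρ).1 hρ).2

theorem neg_re_logDeriv_le_sub_re_inv (hf : AnalyticOnNhd ℂ f (closedBall c R)) (hR : 0 < R)
    (hL : 0 < L) (hc : f c ≠ 0) (hbound : ∀ z ∈ sphere c R, ‖f z‖ ≤ Real.exp L * ‖f c‖) {z : ℂ}
    (hz : z ∈ closedBall c (R / 4)) (hfz : f z ≠ 0)
    (hre : ∀ ρ ∈ closedBall c (R / 2), f ρ = 0 → ρ.re ≤ z.re) {ρ₀ : ℂ}
    (hρ₀ : ρ₀ ∈ closedBall c (R / 2)) (hfρ₀ : f ρ₀ = 0) :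
    -(logDeriv f z).re ≤ 48 * L / R - ((z - ρ₀)⁻¹).re := by
  obtain ⟨S, hS⟩ := exists_finset_mem_iff_mem_closedBall_and_eq_zero hf hR hc
  have hρ₀R := closedBall_subset_closedBall (half_le_self hR.le) hρ₀
  have horder : 1 ≤ analyticOrderNatAt f ρ₀ := by
    rw [Nat.one_le_iff_ne_zero, ← Nat.cast_ne_zero (R := ℕ∞),
      Nat.cast_analyticOrderNatAt (analyticOrderAt_ne_top_of_mem_closedBall hf hc hρ₀R)]
    exact (hf ρ₀ hρ₀R).analyticOrderAt_ne_zero.2 hfρ₀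
  exact neg_re_le_sub_re_inv_of_norm_sub_sum_le
    (norm_logDeriv_sub_sum_le hf hR hL hc hbound hS hz hfz)
    (fun ρ hρ ↦ hre ρ ((hS ρ).1 hρ).1 ((hS ρ).1 hρ).2) ((hS ρ₀).2 ⟨hρ₀, hfρ₀⟩) horder

theorem norm_logDeriv_le_two_mul_add (hf : AnalyticOnNhd ℂ f (closedBall c R)) (hR : 0 < R)
    (hL : 0 < L) (hc : f c ≠ 0) (hbound : ∀ z ∈ sphere c R, ‖f z‖ ≤ Real.exp L * ‖f c‖) {s z : ℂ}
    (hs : s ∈ closedBall c (R / 4)) (hfs : f s ≠ 0) (hz : z ∈ closedBall c (R / 4))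
    (hsep : ∀ ρ ∈ closedBall c (R / 2), f ρ = 0 → 2 * ‖z - s‖ ≤ s.re - ρ.re) :
    ‖logDeriv f z‖ ≤ 2 * ‖logDeriv f s‖ + 3 * (48 * L / R) := by
  obtain ⟨S, hS⟩ := exists_finset_mem_iff_mem_closedBall_and_eq_zero hf hR hc
  have hfz : f z ≠ 0 := ne_zero_of_two_mul_norm_sub_le hfs
    (hsep z (closedBall_subset_closedBall (by linarith) hz))
  exact norm_le_of_norm_sub_sum_le (norm_logDeriv_sub_sum_le hf hR hL hc hbound hS hs hfs)
    (norm_logDeriv_sub_sum_le hf hR hL hc hbound hS hz hfz)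
    fun ρ hρ ↦ hsep ρ ((hS ρ).1 hρ).1 ((hS ρ).1 hρ).2

end LocalZeros

section ZetaGrowth

variable {g : ℝ → ℂ} {C : ℝ} {s : ℂ}

lemma integrableOn_Ioi_one_cpow_mul (hg : Measurable g) (hC : ∀ t, ‖g t‖ ≤ C) (hs : 0 < s.re) :
    IntegrableOn (fun t : ℝ ↦ (t : ℂ) ^ (-s - 1) * g t) (Ioi 1) :=
  (integrableOn_Ioi_cpow_of_lt (by simp only [sub_re, neg_re, one_re]; linarith)
    one_pos).mul_bdd hg.aestronglyMeasurable (.of_forall hC)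

lemma norm_integral_Ioi_one_cpow_mul_le (hC : ∀ t, ‖g t‖ ≤ C) (hs : 0 < s.re) :
    ‖∫ t in Ioi (1 : ℝ), (t : ℂ) ^ (-s - 1) * g t‖ ≤ C / s.re := by
  have hlt : -s.re - 1 < -1 := by linarith
  calc ‖∫ t in Ioi (1 : ℝ), (t : ℂ) ^ (-s - 1) * g t‖
      ≤ ∫ t in Ioi (1 : ℝ), t ^ (-s.re - 1) * C := by
        refine norm_integral_le_of_norm_le
          ((integrableOn_Ioi_rpow_of_lt hlt one_pos).mul_const C) ?_
        filter_upwards [self_mem_ae_restrict measurableSet_Ioi] with t ht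
        have ht0 : 0 < t := one_pos.trans ht
        rw [norm_mul, norm_cpow_eq_rpow_re_of_pos ht0, sub_re, neg_re, one_re]
        gcongr
        exact hC t
    _ = C / s.re := by
        rw [integral_mul_const, integral_Ioi_rpow_of_lt hlt one_pos, Real.one_rpow,
          sub_add_cancel, neg_div_neg_eq]
        ring

lemma differentiableAt_integral_Ioi_one_cpow_mul (hg : Measurable g) (hC : ∀ t, ‖g t‖ ≤ C)
    (hs : 0 < s.re) :
    DifferentiableAt ℂ (fun s ↦ ∫ t in Ioi (1 : ℝ), (t : ℂ) ^ (-s - 1) * g t) s := by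
  set φ := (Ioi (1 : ℝ)).indicator g with hφ
  have hφC : ∀ t, ‖φ t‖ ≤ C := fun t ↦ (norm_indicator_le_norm_self g t).trans (hC t)
  have hφ_int : LocallyIntegrable φ :=
    (locallyIntegrable_const C).mono (hg.indicator measurableSet_Ioi).aestronglyMeasurable
      (.of_forall fun t ↦ (hφC t).trans (Real.le_norm_self C))
  have hmellin : (fun s ↦ ∫ t in Ioi (1 : ℝ), (t : ℂ) ^ (-s - 1) * g t) =
      fun s ↦ mellin φ (-s) := by
    ext s
    have : (fun t : ℝ ↦ (t : ℂ) ^ (-s - 1) • φ t) =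
        (Ioi 1).indicator fun t : ℝ ↦ (t : ℂ) ^ (-s - 1) * g t :=
      funext fun t ↦ (indicator_mul_right (Ioi 1) (fun t : ℝ ↦ (t : ℂ) ^ (-s - 1)) g).symm
    rw [mellin, this, setIntegral_indicator measurableSet_Ioi, Ioi_inter_Ioi,
      max_eq_right zero_le_one]
  rw [hmellin]
  have hdiff : DifferentiableAt ℂ (mellin φ) (-s) := by
    refine mellin_differentiableAt_of_isBigO_rpow (a := 0) (b := -s.re - 1)
      (hφ_int.locallyIntegrableOn _) ?_ (by simpa using hs) ?_ (by simp)
    · exact .of_bound C (.of_forall fun t ↦ by simpa using hφC t)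
    · refine .of_bound 0 ?_
      filter_upwards [Ioo_mem_nhdsGT one_pos] with t ht
      simp [hφ, ht.2.le]
  exact hdiff.comp s (by fun_prop)

/-- The function `s ↦ ∫₁^∞ {t} t^(-s-1) dt`, holomorphic for `0 < Re s`, through which `ζ` is
continued to the half plane `0 < Re s`. -/
noncomputable def zetaFractIntegral (s : ℂ) : ℂ :=
  ∫ t in Ioi (1 : ℝ), (t : ℂ) ^ (-s - 1) * (Int.fract t : ℝ)

lemma norm_ofReal_fract_le_one (t : ℝ) : ‖((Int.fract t : ℝ) : ℂ)‖ ≤ 1 := by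
  rw [norm_real, Real.norm_of_nonneg (Int.fract_nonneg t)]
  exact (Int.fract_lt_one t).le

lemma measurable_ofReal_fract : Measurable fun t : ℝ ↦ ((Int.fract t : ℝ) : ℂ) :=
  measurable_ofReal.comp measurable_fract

lemma riemannZeta_eq_div_sub_mul_zetaFractIntegral (hs : 1 < s.re) :
    riemannZeta s = s / (s - 1) - s * zetaFractIntegral s := by
  have hL := LSeries_eq_mul_integral' (1 : ℕ → ℂ) zero_le_one hs (by
    simpa using Asymptotics.isBigO_refl _ _)
  have hfloor : EqOn (fun t : ℝ ↦ (∑ k ∈ Finset.Icc 1 ⌊t⌋₊, (1 : ℕ → ℂ) k) * (t : ℂ) ^ (-(s + 1)))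
      (fun t : ℝ ↦ (t : ℂ) ^ (-s) - (t : ℂ) ^ (-s - 1) * (Int.fract t : ℝ)) (Ioi 1) := by
    intro t ht
    have ht0 : 0 < t := one_pos.trans ht
    have hpow : (t : ℂ) ^ (-s) = (t : ℂ) ^ (-s - 1) * t := by
      rw [cpow_sub _ _ (ofReal_ne_zero.2 ht0.ne'), cpow_one,
        div_mul_cancel₀ _ (ofReal_ne_zero.2 ht0.ne')]
    have hfract : ((Int.fract t : ℝ) : ℂ) = t - ⌊t⌋₊ := by
      rw [Int.fract, ← natCast_floor_eq_intCast_floor ht0.le, ofReal_sub, ofReal_natCast]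
    simp only [Pi.one_apply, Finset.sum_const, Nat.card_Icc, nsmul_eq_mul, mul_one,
      add_tsub_cancel_right, hpow, hfract, neg_add']
    ring
  have hpow_int : ∫ t in Ioi (1 : ℝ), (t : ℂ) ^ (-s) = 1 / (s - 1) := by
    rw [integral_Ioi_cpow_of_lt (by simpa using hs) one_pos, ofReal_one, one_cpow,
      neg_div, ← div_neg, neg_add, neg_neg, sub_eq_add_neg]
  rw [LSeries_one_eq_riemannZeta hs, setIntegral_congr_fun measurableSet_Ioi hfloor,
    integral_sub (integrableOn_Ioi_cpow_of_lt (by simpa using hs) one_pos)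
      (integrableOn_Ioi_one_cpow_mul measurable_ofReal_fract norm_ofReal_fract_le_one
        (one_pos.trans hs)), hpow_int] at hL
  rw [hL, zetaFractIntegral]
  ring

lemma riemannZeta₁_eq_sub_mul_zetaFractIntegral (hs : 0 < s.re) :
    riemannZeta₁ s = s - s * (s - 1) * zetaFractIntegral s := by
  have hzeta₁ : AnalyticOnNhd ℂ riemannZeta₁ {s : ℂ | 0 < s.re} :=
    fun z _ ↦ differentiable_riemannZeta₁.analyticAt z
  have hcont : AnalyticOnNhd ℂ (fun s ↦ s - s * (s - 1) * zetaFractIntegral s)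
      {s : ℂ | 0 < s.re} := by
    refine DifferentiableOn.analyticOnNhd (fun z hz ↦ ?_) (isOpen_lt continuous_const continuous_re)
    have : DifferentiableAt ℂ zetaFractIntegral z := differentiableAt_integral_Ioi_one_cpow_mul
      measurable_ofReal_fract norm_ofReal_fract_le_one hz
    exact DifferentiableAt.differentiableWithinAt (by fun_prop)
  refine hzeta₁.eqOn_of_preconnected_of_eventuallyEq hcont
    (convex_halfSpace_re_gt 0).isPreconnected (z₀ := 2) (by simp) ?_ hs
  filter_upwards [(isOpen_lt continuous_const continuous_re).mem_nhds
    (show (1 : ℝ) < (2 : ℂ).re by simp)] with z hz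
  have hz1 : z - 1 ≠ 0 := sub_ne_zero.2 (by rintro rfl; simp at hz)
  have hz_eq := riemannZeta_eq_div_sub_mul_zetaFractIntegral hz
  rw [riemannZeta_eq_inv_sub_mul (sub_ne_zero.1 hz1)] at hz_eq
  field_simp at hz_eq
  linear_combination hz_eq

lemma norm_riemannZeta_le (hs : 0 < s.re) (hs1 : s ≠ 1) :
    ‖riemannZeta s‖ ≤ ‖s‖ * (1 / ‖s - 1‖ + 1 / s.re) := by
  have hs1' := sub_ne_zero.2 hs1
  have hzeta : riemannZeta s = s * (1 / (s - 1) - zetaFractIntegral s) := by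
    rw [riemannZeta_eq_inv_sub_mul hs1, riemannZeta₁_eq_sub_mul_zetaFractIntegral hs]
    field
  have hF : ‖zetaFractIntegral s‖ ≤ 1 / s.re :=
    norm_integral_Ioi_one_cpow_mul_le norm_ofReal_fract_le_one hs
  rw [hzeta, norm_mul]
  gcongr
  exact (norm_sub_le _ _).trans (by rw [norm_div, norm_one]; gcongr)

end ZetaGrowth

section DirichletSeries

open scoped ComplexOrder

variable {f g : ℕ → ℂ} {s : ℂ} {σ : ℝ}

lemma term_add_eq_term_mul_cpow (f : ℕ → ℂ) (s w : ℂ) (n : ℕ) :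
    LSeries.term f (s + w) n = LSeries.term f s n * (n : ℂ) ^ (-w) := by
  rcases eq_or_ne n 0 with rfl | hn
  · simp only [LSeries.term_zero, zero_mul]
  · rw [LSeries.term_of_ne_zero hn, LSeries.term_of_ne_zero hn,
      cpow_add _ _ (Nat.cast_ne_zero.2 hn), cpow_neg, div_mul_eq_div_div, div_eq_mul_inv (_ / _)]

lemma norm_LSeries_le_re_LSeries (hfg : ∀ n, ‖f n‖ ≤ (g n).re)
    (hg : LSeriesSummable g s.re) : ‖LSeries f s‖ ≤ (LSeries g s.re).re := by
  have hterm (n : ℕ) : ‖LSeries.term f s n‖ ≤ (LSeries.term g s.re n).re := by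
    rcases eq_or_ne n 0 with rfl | hn
    · simp
    · rw [LSeries.norm_term_eq, if_neg hn, LSeries.term_of_ne_zero hn, ← ofReal_natCast,
        ← ofReal_cpow n.cast_nonneg, div_ofReal_re]
      gcongr
      exact hfg n
  have hsum : Summable fun n ↦ (LSeries.term g s.re n).re := reCLM.summable hg
  rw [LSeries, LSeries, re_tsum hg]
  exact tsum_of_norm_bounded hsum.hasSum hterm

lemma three_add_four_mul_re_add_re_sq_nonneg {u : ℂ} (hu : ‖u‖ = 1) :
    0 ≤ 3 + 4 * u.re + (u ^ 2).re := by
  have hsq : u.re * u.re + u.im * u.im = 1 := by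
    rw [← normSq_apply, normSq_eq_norm_sq, hu, one_pow]
  rw [sq, mul_re]
  nlinarith [sq_nonneg (1 + u.re)]

lemma three_mul_re_LSeries_add_nonneg (hg : ∀ n, 0 ≤ g n) (hσ : LSeriesSummable g σ) (t : ℝ) :
    0 ≤ 3 * (LSeries g σ).re + 4 * (LSeries g (σ + t * I)).re
      + (LSeries g (σ + 2 * t * I)).re := by
  have hsum {w : ℂ} (hw : w.re = 0) : LSeriesSummable g (σ + w) :=
    (LSeriesSummable_iff_of_re_eq_re (by simp [hw])).1 hσ
  have hsum₁ := hsum (w := t * I) (by simp)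
  have hsum₂ := hsum (w := 2 * t * I) (by simp)
  have hre {w : ℂ} (hw : LSeriesSummable g w) :
      HasSum (fun n ↦ (LSeries.term g w n).re) (LSeries g w).re :=
    reCLM.hasSum hw.LSeriesHasSum
  refine ((((hre hσ).mul_left 3).add ((hre hsum₁).mul_left 4)).add (hre hsum₂)).nonneg fun n ↦ ?_
  rcases Nat.eq_zero_or_pos n with rfl | hn
  · simp
  set a := LSeries.term g σ n with ha_def
  set u : ℂ := (n : ℂ) ^ (-(t * I)) with hu_def
  have ha : 0 ≤ a := LSeries.term_nonneg (hg n) σ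
  have hu : ‖u‖ = 1 := by simp [hu_def, norm_natCast_cpow_of_pos hn]
  have hu_sq : (n : ℂ) ^ (-(2 * t * I)) = u ^ 2 := by
    rw [hu_def, ← cpow_nat_mul]
    congr 1
    push_cast
    ring
  rw [term_add_eq_term_mul_cpow, term_add_eq_term_mul_cpow, hu_sq, ← ha_def, ← hu_def,
    eq_re_of_ofReal_le ha, re_ofReal_mul, re_ofReal_mul, ofReal_re]
  linarith [mul_nonneg (Complex.nonneg_iff.1 ha).1 (three_add_four_mul_re_add_re_sq_nonneg hu)]

end DirichletSeries

section LogDerivRightOfOne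

open scoped ComplexOrder

variable {s : ℂ} {σ : ℝ}

lemma norm_logDeriv_riemannZeta_le (hs : 1 < s.re) :
    ‖logDeriv riemannZeta s‖ ≤ -(logDeriv riemannZeta s.re).re := by
  have h := norm_LSeries_le_re_LSeries (s := s)
    (f := fun n ↦ (ArithmeticFunction.vonMangoldt n : ℂ))
    (g := fun n ↦ (ArithmeticFunction.vonMangoldt n : ℂ))
    (fun n ↦ by
      rw [ofReal_re, norm_real, Real.norm_of_nonneg ArithmeticFunction.vonMangoldt_nonneg])
    (ArithmeticFunction.LSeriesSummable_vonMangoldt hs)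
  rw [ArithmeticFunction.LSeries_vonMangoldt_eq_deriv_riemannZeta_div hs,
    ArithmeticFunction.LSeries_vonMangoldt_eq_deriv_riemannZeta_div (by simpa using hs)] at h
  simpa only [neg_div, norm_neg, neg_re, logDeriv_apply] using h

lemma three_mul_re_logDeriv_riemannZeta_add_nonpos (hσ : 1 < σ) (t : ℝ) :
    3 * (logDeriv riemannZeta σ).re + 4 * (logDeriv riemannZeta (σ + t * I)).re
      + (logDeriv riemannZeta (σ + 2 * t * I)).re ≤ 0 := by
  have hL {w : ℂ} (hw : w.re = σ) :
      LSeries (fun n ↦ (ArithmeticFunction.vonMangoldt n : ℂ)) w = -logDeriv riemannZeta w := by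
    rw [ArithmeticFunction.LSeries_vonMangoldt_eq_deriv_riemannZeta_div (by rwa [hw]), neg_div,
      logDeriv_apply]
  have h := three_mul_re_LSeries_add_nonneg (σ := σ)
    (g := fun n ↦ (ArithmeticFunction.vonMangoldt n : ℂ))
    (fun n ↦ zero_le_real.2 ArithmeticFunction.vonMangoldt_nonneg)
    (ArithmeticFunction.LSeriesSummable_vonMangoldt (by simpa using hσ)) t
  rw [hL (by simp), hL (by simp), hL (by simp), neg_re, neg_re, neg_re] at h
  linarith

lemma one_le_re_riemannZeta_mul_norm_riemannZeta (hs : 1 < s.re) :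
    1 ≤ (riemannZeta s.re).re * ‖riemannZeta s‖ := by
  have hs' : 1 < (s.re : ℂ).re := by simpa using hs
  have hμ := norm_LSeries_le_re_LSeries (s := s)
    (f := fun n ↦ (ArithmeticFunction.moebius n : ℂ)) (g := 1)
    (fun n ↦ by
      simpa using mod_cast ArithmeticFunction.abs_moebius_le_one)
    (LSeriesSummable_one_iff.2 hs')
  rw [LSeries_one_eq_riemannZeta hs'] at hμ
  have hprod := congrArg norm (LSeries_one_mul_Lseries_moebius hs)
  rw [LSeries_one_eq_riemannZeta hs, norm_mul, norm_one] at hprod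
  rw [← hprod, mul_comm]
  gcongr

lemma riemannZeta₁_ne_zero_of_one_le_re (hs : 1 ≤ s.re) : riemannZeta₁ s ≠ 0 := by
  rcases eq_or_ne s 1 with rfl | hs1
  · simp
  · have h := riemannZeta_ne_zero_of_one_le_re hs
    rw [riemannZeta_eq_inv_sub_mul hs1] at h
    exact right_ne_zero_of_mul h

lemma logDeriv_riemannZeta_eq (hs1 : s ≠ 1) (hs : riemannZeta₁ s ≠ 0) :
    logDeriv riemannZeta s = logDeriv riemannZeta₁ s - (s - 1)⁻¹ := by
  simp only [logDeriv_apply]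
  grind [deriv_riemannZeta_eq_neg_inv_sub_sq_mul_add, riemannZeta_eq_inv_sub_mul]

lemma analyticAt_logDeriv_riemannZeta₁ (hs : 1 ≤ s.re) :
    AnalyticAt ℂ (logDeriv riemannZeta₁) s :=
  have h := differentiable_riemannZeta₁.analyticAt s
  h.deriv.div h (riemannZeta₁_ne_zero_of_one_le_re hs)

lemma exists_neg_re_logDeriv_riemannZeta_le (b : ℝ) :
    ∃ C : ℝ, 0 < C ∧ ∀ σ : ℝ, 1 < σ → σ ≤ b →
      -(logDeriv riemannZeta σ).re ≤ 1 / (σ - 1) + C := by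
  have hcont : ContinuousOn (fun σ : ℝ ↦ logDeriv riemannZeta₁ σ) (Icc 1 b) := fun σ hσ ↦
    ((analyticAt_logDeriv_riemannZeta₁ (by simpa using hσ.1)).continuousAt.comp
      continuous_ofReal.continuousAt).continuousWithinAt
  obtain ⟨C, hC⟩ := isCompact_Icc.exists_bound_of_continuousOn hcont
  refine ⟨|C| + 1, by positivity, fun σ h1 hb ↦ ?_⟩
  have hσ : (1 : ℝ) ≤ (σ : ℂ).re := by simpa using h1.le
  have hpole : (((σ : ℂ) - 1)⁻¹).re = 1 / (σ - 1) := by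
    rw [← ofReal_one, ← ofReal_sub, ← ofReal_inv, ofReal_re, one_div]
  rw [logDeriv_riemannZeta_eq (by exact_mod_cast h1.ne') (riemannZeta₁_ne_zero_of_one_le_re hσ),
    sub_re, hpole]
  linarith [neg_le_of_abs_le ((abs_re_le_norm _).trans (hC σ ⟨h1.le, hb⟩)), le_abs_self C]

end LogDerivRightOfOne

section ZetaLocal

variable {c s z ρ : ℂ}

lemma one_le_log_abs_add_two {t : ℝ} (ht : 1 ≤ |t|) : 1 ≤ Real.log (|t| + 2) := by
  rw [Real.le_log_iff_exp_le (by positivity)]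
  linarith [Real.exp_one_lt_d9]

lemma log_abs_add_two_le_two_mul {t u : ℝ} (h : |u| ≤ 2 * |t|) :
    Real.log (|u| + 2) ≤ 2 * Real.log (|t| + 2) := by
  calc Real.log (|u| + 2) ≤ Real.log ((|t| + 2) ^ 2) :=
        Real.log_le_log (by positivity) (by nlinarith [abs_nonneg t])
    _ = 2 * Real.log (|t| + 2) := by rw [Real.log_pow, Nat.cast_ofNat]

lemma re_lt_one_of_riemannZeta_eq_zero (h : riemannZeta ρ = 0) : ρ.re < 1 :=
  not_le.1 fun hρ ↦ riemannZeta_ne_zero_of_one_le_re hρ h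

lemma ne_one_of_im_ne_zero (h : s.im ≠ 0) : s ≠ 1 := by
  rintro rfl
  exact h one_im

lemma half_le_abs_im_of_mem_closedBall (hc : 1 ≤ |c.im|) (hz : z ∈ closedBall c (1 / 2)) :
    1 / 2 ≤ |z.im| := by
  have him : |c.im - z.im| ≤ 1 / 2 := by
    rw [abs_sub_comm, ← sub_im]
    exact (abs_im_le_norm _).trans (mem_closedBall_iff_norm.1 hz)
  linarith [abs_sub_abs_le_abs_sub c.im z.im]

lemma analyticOnNhd_riemannZeta_closedBall (hc : 1 ≤ |c.im|) :
    AnalyticOnNhd ℂ riemannZeta (closedBall c (1 / 2)) := fun _ hz ↦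
  analyticOn_riemannZeta _ <| ne_one_of_im_ne_zero <| abs_pos.1 <|
    one_half_pos.trans_le (half_le_abs_im_of_mem_closedBall hc hz)

lemma norm_riemannZeta_le_of_mem_closedBall (hre : c.re = 17 / 16) (hc : 1 ≤ |c.im|)
    (hz : z ∈ closedBall c (1 / 2)) : ‖riemannZeta z‖ ≤ 4 * (|c.im| + 2) := by
  have him := half_le_abs_im_of_mem_closedBall hc hz
  rw [mem_closedBall_iff_norm] at hz
  have hz_re : 9 / 16 ≤ z.re := by
    have := neg_le_of_abs_le ((abs_re_le_norm _).trans hz)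
    rw [sub_re, hre] at this
    linarith
  have hz_norm : ‖z‖ ≤ |c.im| + 2 := by
    have hc_norm := norm_le_abs_re_add_abs_im c
    rw [hre, abs_of_pos (by norm_num)] at hc_norm
    linarith [norm_le_norm_sub_add z c]
  have hz_sub : 1 / 2 ≤ ‖z - 1‖ := him.trans (by simpa using abs_im_le_norm (z - 1))
  calc ‖riemannZeta z‖ ≤ ‖z‖ * (1 / ‖z - 1‖ + 1 / z.re) :=
        norm_riemannZeta_le (by linarith) (ne_one_of_im_ne_zero (abs_pos.1 (by linarith)))
    _ ≤ (|c.im| + 2) * (1 / (1 / 2) + 1 / (9 / 16)) := by gcongr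
    _ ≤ 4 * (|c.im| + 2) := by linarith [abs_nonneg c.im]

lemma exists_norm_riemannZeta_le_exp_mul :
    ∃ C : ℝ, 0 < C ∧ ∀ c : ℂ, c.re = 17 / 16 → 1 ≤ |c.im| → ∀ z ∈ closedBall c (1 / 2),
      ‖riemannZeta z‖ ≤ Real.exp (C * Real.log (|c.im| + 2)) * ‖riemannZeta c‖ := by
  set K := (riemannZeta (17 / 16 : ℝ)).re
  have hK {c : ℂ} (hre : c.re = 17 / 16) : 1 ≤ K * ‖riemannZeta c‖ := by
    have := one_le_re_riemannZeta_mul_norm_riemannZeta (s := c) (by rw [hre]; norm_num)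
    rwa [hre] at this
  have hK0 : 0 < K :=
    pos_of_mul_pos_left (one_pos.trans_le (hK (ofReal_re (17 / 16)))) (norm_nonneg _)
  refine ⟨|Real.log (4 * K)| + 1, by positivity, fun c hre hc z hz ↦ ?_⟩
  have hlog := one_le_log_abs_add_two hc
  calc ‖riemannZeta z‖ ≤ 4 * (|c.im| + 2) * 1 := by
        rw [mul_one]
        exact norm_riemannZeta_le_of_mem_closedBall hre hc hz
    _ ≤ 4 * (|c.im| + 2) * (K * ‖riemannZeta c‖) := by gcongr; exact hK hre
    _ = Real.exp (Real.log (4 * K) + Real.log (|c.im| + 2)) * ‖riemannZeta c‖ := by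
        rw [Real.exp_add, Real.exp_log (by positivity), Real.exp_log (by positivity)]
        ring
    _ ≤ Real.exp ((|Real.log (4 * K)| + 1) * Real.log (|c.im| + 2)) * ‖riemannZeta c‖ := by
        gcongr
        nlinarith [le_abs_self (Real.log (4 * K)), abs_nonneg (Real.log (4 * K))]

lemma mem_closedBall_of_im_eq {r : ℝ} (him : z.im = c.im) (hre : |z.re - c.re| ≤ r) :
    z ∈ closedBall c r := by
  rwa [mem_closedBall, dist_of_im_eq him]

lemma exists_neg_re_logDeriv_riemannZeta_le_mul_log :
    ∃ B : ℝ, 0 < B ∧ ∀ s : ℂ, 1 < s.re → s.re ≤ 17 / 16 → 1 ≤ |s.im| →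
      -(logDeriv riemannZeta s).re ≤ B * Real.log (|s.im| + 2) := by
  obtain ⟨C, hC, hbound⟩ := exists_norm_riemannZeta_le_exp_mul
  refine ⟨96 * C, by positivity, fun s h1 h2 him ↦ ?_⟩
  have hlog := one_le_log_abs_add_two him
  set c : ℂ := ⟨17 / 16, s.im⟩
  have hc : riemannZeta c ≠ 0 := riemannZeta_ne_zero_of_one_le_re (by norm_num [c])
  have hs : s ∈ closedBall c (1 / 2 / 4) :=
    mem_closedBall_of_im_eq rfl (abs_le.2 ⟨by grind, by grind⟩)
  have h := neg_re_logDeriv_le (analyticOnNhd_riemannZeta_closedBall (c := c) him) one_half_pos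
    (mul_pos hC (one_pos.trans_le hlog)) hc
    (fun z hz ↦ hbound c rfl him z (sphere_subset_closedBall hz)) hs
    (riemannZeta_ne_zero_of_one_le_re h1.le)
    fun ρ _ hρ ↦ ((re_lt_one_of_riemannZeta_eq_zero hρ).trans h1).le
  linarith

lemma exists_neg_re_logDeriv_riemannZeta_le_mul_log_sub :
    ∃ B : ℝ, 0 < B ∧ ∀ s : ℂ, 1 < s.re → s.re ≤ 17 / 16 → 1 ≤ |s.im| →
      ∀ ρ : ℂ, riemannZeta ρ = 0 → ρ.im = s.im → 15 / 16 ≤ ρ.re →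
        -(logDeriv riemannZeta s).re ≤ B * Real.log (|s.im| + 2) - 1 / (s.re - ρ.re) := by
  obtain ⟨C, hC, hbound⟩ := exists_norm_riemannZeta_le_exp_mul
  refine ⟨96 * C, by positivity, fun s h1 h2 him ρ hρ hρim hρre ↦ ?_⟩
  have hlog := one_le_log_abs_add_two him
  have hρ1 := re_lt_one_of_riemannZeta_eq_zero hρ
  set c : ℂ := ⟨17 / 16, s.im⟩
  have hc : riemannZeta c ≠ 0 := riemannZeta_ne_zero_of_one_le_re (by norm_num [c])
  have hs : s ∈ closedBall c (1 / 2 / 4) :=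
    mem_closedBall_of_im_eq rfl (abs_le.2 ⟨by grind, by grind⟩)
  have hρc : ρ ∈ closedBall c (1 / 2 / 2) :=
    mem_closedBall_of_im_eq hρim (abs_le.2 ⟨by grind, by grind⟩)
  have hinv : ((s - ρ)⁻¹).re = 1 / (s.re - ρ.re) := by
    have : s - ρ = (s.re - ρ.re : ℝ) := Complex.ext (by simp) (by simp [hρim])
    rw [this, ← ofReal_inv, ofReal_re, one_div]
  have h := neg_re_logDeriv_le_sub_re_inv (analyticOnNhd_riemannZeta_closedBall (c := c) him)
    one_half_pos (mul_pos hC (one_pos.trans_le hlog)) hc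
    (fun z hz ↦ hbound c rfl him z (sphere_subset_closedBall hz)) hs
    (riemannZeta_ne_zero_of_one_le_re h1.le)
    (fun ρ _ hρ ↦ ((re_lt_one_of_riemannZeta_eq_zero hρ).trans h1).le) hρc hρ
  rw [hinv] at h
  linarith

end ZetaLocal

section ZeroFreeRegion

lemma exists_four_div_sub_le_three_div_sub_one_add :
    ∃ D : ℝ, 8 ≤ D ∧ ∀ ρ : ℂ, riemannZeta ρ = 0 → 1 ≤ |ρ.im| → 15 / 16 ≤ ρ.re →
      ∀ σ : ℝ, 1 < σ → σ ≤ 17 / 16 →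
        4 / (σ - ρ.re) ≤ 3 / (σ - 1) + D * Real.log (|ρ.im| + 2) := by
  obtain ⟨C₀, hC₀, hpole⟩ := exists_neg_re_logDeriv_riemannZeta_le (17 / 16)
  obtain ⟨B₁, hB₁, hzero⟩ := exists_neg_re_logDeriv_riemannZeta_le_mul_log_sub
  obtain ⟨B₂, hB₂, hdouble⟩ := exists_neg_re_logDeriv_riemannZeta_le_mul_log
  refine ⟨3 * C₀ + 4 * B₁ + 2 * B₂ + 8, by linarith, fun ρ hρ him hre σ h1 h2 ↦ ?_⟩
  have h341 := three_mul_re_logDeriv_riemannZeta_add_nonpos h1 ρ.im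
  have hat_pole := hpole σ h1 h2
  have hat_zero := hzero (σ + ρ.im * I) (by simpa) (by simpa) (by simpa) ρ hρ (by simp) hre
  have him₂ : |2 * ρ.im| = 2 * |ρ.im| := by rw [abs_mul, abs_two]
  have hat_double := hdouble (σ + 2 * ρ.im * I) (by simpa) (by simpa) (by simp; linarith)
  have hlog₂ := log_abs_add_two_le_two_mul him₂.le
  have hlog := one_le_log_abs_add_two him
  simp only [add_re, ofReal_re, mul_re, I_re, mul_zero, ofReal_im, I_im, mul_one, sub_self,
    add_zero, add_im, mul_im, zero_add, re_ofNat, im_ofNat, zero_mul, sub_zero]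
    at hat_zero hat_double
  have hfour : 4 / (σ - ρ.re) = 4 * (1 / (σ - ρ.re)) := by ring
  have hthree : 3 / (σ - 1) = 3 * (1 / (σ - 1)) := by ring
  nlinarith [mul_le_mul_of_nonneg_left hlog₂ hB₂.le, le_mul_of_one_le_right hC₀.le hlog]

lemma le_one_sub_of_four_div_le {β D : ℝ} (hD : 0 < D) (hβ : β < 1)
    (h : 4 / (1 + 1 / (2 * D) - β) ≤ 3 / (1 / (2 * D)) + D) : β ≤ 1 - 1 / (14 * D) := by
  have hden : 0 < 1 + 1 / (2 * D) - β := by linarith [one_div_pos.2 (mul_pos two_pos hD)]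
  rw [show 3 / (1 / (2 * D)) + D = 7 * D by field, div_le_iff₀ hden] at h
  have heq : 7 * D * (1 - 1 / (14 * D) - β) = 7 * D * (1 + 1 / (2 * D) - β) - 4 := by
    field
  have hpos : 0 < 7 * D := by positivity
  linarith [nonneg_of_mul_nonneg_right (heq.trans_ge (sub_nonneg.2 h)) hpos]

theorem exists_re_le_one_sub_div_log_of_riemannZeta_eq_zero :
    ∃ c : ℝ, 0 < c ∧ ∀ ρ : ℂ, riemannZeta ρ = 0 → 1 ≤ |ρ.im| →
      ρ.re ≤ 1 - c / Real.log (|ρ.im| + 2) := by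
  obtain ⟨D, hD, hfour⟩ := exists_four_div_sub_le_three_div_sub_one_add
  refine ⟨1 / (14 * D), by positivity, fun ρ hρ him ↦ ?_⟩
  have hlog := one_le_log_abs_add_two him
  set ℓ := Real.log (|ρ.im| + 2)
  have hDℓ : 8 ≤ D * ℓ := hD.trans (le_mul_of_one_le_right (by linarith) hlog)
  have hsmall : 1 / (14 * (D * ℓ)) ≤ 1 / 16 := by gcongr; linarith
  have hx : 0 < 1 / (2 * (D * ℓ)) := by positivity
  rw [div_div, mul_assoc]
  rcases le_total ρ.re (15 / 16) with hre | hre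
  · linarith
  · have hx' : 1 / (2 * (D * ℓ)) ≤ 1 / 16 := by gcongr; linarith
    have h := hfour ρ hρ him hre (1 + 1 / (2 * (D * ℓ))) (by linarith) (by linarith)
    rw [add_sub_cancel_left] at h
    exact le_one_sub_of_four_div_le (by linarith) (re_lt_one_of_riemannZeta_eq_zero hρ) h

lemma exists_re_le_one_sub_div_log_of_abs_im_le :
    ∃ c : ℝ, 0 < c ∧ c ≤ 1 / 16 ∧ ∀ (t : ℝ) (ρ : ℂ), riemannZeta ρ = 0 → 1 ≤ |ρ.im| →
      |ρ.im| ≤ 2 * |t| → ρ.re ≤ 1 - c / Real.log (|t| + 2) := by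
  obtain ⟨c, hc, hzero⟩ := exists_re_le_one_sub_div_log_of_riemannZeta_eq_zero
  refine ⟨min (c / 2) (1 / 16), by positivity, min_le_right _ _, fun t ρ hρ him ht ↦ ?_⟩
  have hlog := one_le_log_abs_add_two him
  have hlog_le := log_abs_add_two_le_two_mul ht
  calc ρ.re ≤ 1 - c / Real.log (|ρ.im| + 2) := hzero ρ hρ him
    _ ≤ 1 - c / (2 * Real.log (|t| + 2)) := by gcongr
    _ = 1 - c / 2 / Real.log (|t| + 2) := by rw [div_div]
    _ ≤ 1 - min (c / 2) (1 / 16) / Real.log (|t| + 2) := by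
        gcongr
        · linarith
        · exact min_le_left _ _

end ZeroFreeRegion

section LocalBound

variable {t δ : ℝ} {z : ℂ}

lemma exists_norm_logDeriv_riemannZeta_le_two_mul_add :
    ∃ B : ℝ, 0 < B ∧ ∀ t : ℝ, 1 ≤ |t| →
      ∀ s ∈ closedBall (1 + t * I) (1 / 16), ∀ z ∈ closedBall (1 + t * I) (1 / 16), 1 ≤ s.re →
        (∀ ρ : ℂ, |ρ.im - t| ≤ 1 / 4 → riemannZeta ρ = 0 → 2 * ‖z - s‖ ≤ s.re - ρ.re) →
          ‖logDeriv riemannZeta z‖ ≤ 2 * ‖logDeriv riemannZeta s‖ + B * Real.log (|t| + 2) := by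
  obtain ⟨C, hC, hbound⟩ := exists_norm_riemannZeta_le_exp_mul
  refine ⟨288 * C, by positivity, fun t ht s hs z hz hs_re hsep ↦ ?_⟩
  have hlog := one_le_log_abs_add_two ht
  set c : ℂ := ⟨17 / 16, t⟩
  have hc : riemannZeta c ≠ 0 := riemannZeta_ne_zero_of_one_le_re (by norm_num [c])
  have hball : closedBall (1 + t * I) (1 / 16) ⊆ closedBall c (1 / 2 / 4) := by
    refine closedBall_subset_closedBall' ?_
    rw [dist_of_im_eq (by simp [c]), Real.dist_eq]
    norm_num [c]
  have h := norm_logDeriv_le_two_mul_add (analyticOnNhd_riemannZeta_closedBall (c := c) ht)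
    one_half_pos (mul_pos hC (one_pos.trans_le hlog)) hc
    (fun w hw ↦ hbound c rfl ht w (sphere_subset_closedBall hw)) (hball hs)
    (riemannZeta_ne_zero_of_one_le_re hs_re) (hball hz) fun ρ hρ hρ0 ↦ hsep ρ ?_ hρ0
  · linarith
  · have him := (abs_im_le_norm _).trans (mem_closedBall_iff_norm.1 hρ)
    rw [sub_im] at him
    linarith

lemma exists_norm_logDeriv_riemannZeta_le_of_re_le_one_sub :
    ∃ B : ℝ, 0 < B ∧ ∀ t : ℝ, 1 ≤ |t| → ∀ δ : ℝ, 0 < δ → δ ≤ 1 / 16 →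
      (∀ ρ : ℂ, |ρ.im - t| ≤ 1 / 4 → riemannZeta ρ = 0 → ρ.re ≤ 1 - δ) →
        ∀ z ∈ closedBall (1 + t * I) (δ / 3),
          ‖logDeriv riemannZeta z‖ ≤ B * (1 / δ + Real.log (|t| + 2)) := by
  obtain ⟨B, hB, hcompare⟩ := exists_norm_logDeriv_riemannZeta_le_two_mul_add
  obtain ⟨C, hC, hpole⟩ := exists_neg_re_logDeriv_riemannZeta_le (17 / 16)
  refine ⟨6 + 2 * C + B, by positivity, fun t ht δ hδ hδ' hgap z hz ↦ ?_⟩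
  have hlog := one_le_log_abs_add_two ht
  set s : ℂ := ⟨1 + δ / 3, t⟩
  have hs_re : s.re = 1 + δ / 3 := rfl
  have hs : s ∈ closedBall (1 + t * I) (δ / 3) :=
    mem_closedBall_of_im_eq (by simp [s]) (by simp [s, abs_of_nonneg (div_pos hδ three_pos).le])
  have hzs : ‖z - s‖ ≤ δ / 3 + δ / 3 := by
    rw [← dist_eq_norm]
    exact (dist_triangle_right z s (1 + t * I)).trans (add_le_add hz hs)
  have hball := closedBall_subset_closedBall (x := 1 + t * I) (show δ / 3 ≤ 1 / 16 by linarith)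
  have h := hcompare t ht s (hball hs) z (hball hz) (by linarith) fun ρ him hρ ↦ by
    linarith [hgap ρ him hρ]
  have hs_norm := (norm_logDeriv_riemannZeta_le (by linarith)).trans
    (hpole s.re (by linarith) (by linarith))
  have hinv : 1 / (s.re - 1) = 3 * (1 / δ) := by rw [hs_re, add_sub_cancel_left]; field
  have hδ_inv : 0 < 1 / δ := by positivity
  nlinarith [mul_pos hC hδ_inv, mul_pos hB hδ_inv, le_mul_of_one_le_right hC.le hlog]

lemma riemannZeta_ne_zero_of_mem_closedBall (hδ : 0 < δ) (hδ' : δ ≤ 1 / 16)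
    (hgap : ∀ ρ : ℂ, |ρ.im - t| ≤ 1 / 4 → riemannZeta ρ = 0 → ρ.re ≤ 1 - δ)
    (hz : z ∈ closedBall (1 + t * I) (δ / 3)) : riemannZeta z ≠ 0 := by
  rw [mem_closedBall_iff_norm] at hz
  have hre := (abs_re_le_norm _).trans hz
  have him := (abs_im_le_norm _).trans hz
  simp only [sub_re, add_re, one_re, re_ofReal_mul, I_re, mul_zero, add_zero, sub_im, add_im,
    one_im, im_ofReal_mul, I_im, mul_one, zero_add] at hre him
  intro h0
  linarith [hgap z (by linarith) h0, neg_le_of_abs_le hre]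

lemma exists_norm_logDeriv_riemannZeta_le_mul_log :
    ∃ B r : ℝ, 0 < B ∧ 0 < r ∧ ∀ t : ℝ, 2 ≤ |t| →
      ∀ z ∈ closedBall (1 + t * I) (r / Real.log (|t| + 2)),
        AnalyticAt ℂ (logDeriv riemannZeta) z ∧
          ‖logDeriv riemannZeta z‖ ≤ B * Real.log (|t| + 2) := by
  obtain ⟨c, hc, hc', hzero⟩ := exists_re_le_one_sub_div_log_of_abs_im_le
  obtain ⟨B, hB, hbound⟩ := exists_norm_logDeriv_riemannZeta_le_of_re_le_one_sub
  refine ⟨B * (1 / c + 1), c / 3, by positivity, by positivity, fun t ht z hz ↦ ?_⟩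
  have hlog := one_le_log_abs_add_two (one_le_two.trans ht)
  set ℓ := Real.log (|t| + 2)
  have hδ : 0 < c / ℓ := by positivity
  have hδ' : c / ℓ ≤ 1 / 16 := (div_le_self hc.le hlog).trans hc'
  have hgap : ∀ ρ : ℂ, |ρ.im - t| ≤ 1 / 4 → riemannZeta ρ = 0 → ρ.re ≤ 1 - c / ℓ := by
    intro ρ him hρ
    have h1 := abs_sub_abs_le_abs_sub t ρ.im
    have h2 := abs_sub_abs_le_abs_sub ρ.im t
    rw [abs_sub_comm] at h1
    exact hzero t ρ hρ (by linarith) (by linarith)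
  rw [div_right_comm] at hz
  have hanalytic : AnalyticAt ℂ riemannZeta z :=
    analyticOnNhd_riemannZeta_closedBall (c := 1 + t * I) (by simpa using one_le_two.trans ht) z
      (closedBall_subset_closedBall (by linarith) hz)
  refine ⟨hanalytic.deriv.div hanalytic (riemannZeta_ne_zero_of_mem_closedBall hδ hδ' hgap hz), ?_⟩
  calc ‖logDeriv riemannZeta z‖ ≤ B * (1 / (c / ℓ) + ℓ) :=
        hbound t (one_le_two.trans ht) _ hδ hδ' hgap z hz
    _ = B * (1 / c + 1) * ℓ := by field

end LocalBound

section Taylor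

lemma exists_norm_iteratedDeriv_logDeriv_riemannZeta_le_mul_log_pow (n : ℕ) :
    ∃ A : ℝ, 0 < A ∧ ∀ t : ℝ, 2 ≤ |t| →
      ‖iteratedDeriv n (logDeriv riemannZeta) (1 + t * I)‖
        ≤ A * Real.log (|t| + 2) ^ (n + 1) := by
  obtain ⟨B, r, hB, hr, hbound⟩ := exists_norm_logDeriv_riemannZeta_le_mul_log
  refine ⟨n.factorial * B / r ^ n, by positivity, fun t ht ↦ ?_⟩
  have hlog := one_le_log_abs_add_two (one_le_two.trans ht)
  set ℓ := Real.log (|t| + 2)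
  have hrℓ : 0 < r / ℓ := by positivity
  have hdiff : DiffContOnCl ℂ (logDeriv riemannZeta) (ball (1 + t * I) (r / ℓ)) := by
    refine DifferentiableOn.diffContOnCl fun z hz ↦ ?_
    rw [closure_ball _ hrℓ.ne'] at hz
    exact (hbound t ht z hz).1.differentiableAt.differentiableWithinAt
  calc ‖iteratedDeriv n (logDeriv riemannZeta) (1 + t * I)‖
      ≤ n.factorial * (B * ℓ) / (r / ℓ) ^ n :=
        norm_iteratedDeriv_le_of_forall_mem_sphere_norm_le n hrℓ hdiff
          fun z hz ↦ (hbound t ht z (sphere_subset_closedBall hz)).2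
    _ = n.factorial * B / r ^ n * ℓ ^ (n + 1) := by
        rw [div_pow]
        field

lemma norm_iteratedDeriv_inv_sub (n : ℕ) (a z : ℂ) :
    ‖iteratedDeriv n (fun s ↦ (s - a)⁻¹) z‖ = n.factorial * (1 / ‖z - a‖) ^ (n + 1) := by
  have hzpow : (-1 - n : ℤ) = -((n + 1 : ℕ) : ℤ) := by push_cast; ring
  rw [congrFun (iteratedDeriv_comp_sub_const n (fun w : ℂ ↦ w⁻¹) a) z, iteratedDeriv_eq_iterate,
    iter_deriv_inv, hzpow, zpow_neg, zpow_natCast]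
  simp

lemma iteratedDeriv_logDeriv_riemannZeta_eq (n : ℕ) {s : ℂ} (hs : 1 ≤ s.re) (hs1 : s ≠ 1) :
    iteratedDeriv n (logDeriv riemannZeta) s =
      iteratedDeriv n (logDeriv riemannZeta₁) s - iteratedDeriv n (fun z ↦ (z - 1)⁻¹) s := by
  have hne : ∀ᶠ z in 𝓝 s, riemannZeta₁ z ≠ 0 :=
    differentiable_riemannZeta₁.continuous.continuousAt.eventually_ne
      (riemannZeta₁_ne_zero_of_one_le_re hs)
  have heq : logDeriv riemannZeta =ᶠ[𝓝 s] logDeriv riemannZeta₁ - fun z ↦ (z - 1)⁻¹ := by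
    filter_upwards [hne, eventually_ne_nhds hs1] with z hz hz1 using logDeriv_riemannZeta_eq hz1 hz
  have hinv : AnalyticAt ℂ (fun z ↦ (z - 1)⁻¹) s :=
    (analyticAt_id.sub analyticAt_const).inv (sub_ne_zero.2 hs1)
  rw [heq.iteratedDeriv_eq,
    iteratedDeriv_sub (analyticAt_logDeriv_riemannZeta₁ hs).contDiffAt hinv.contDiffAt]

lemma exists_norm_iteratedDeriv_logDeriv_riemannZeta₁_le (n : ℕ) (T : ℝ) :
    ∃ B : ℝ, 0 < B ∧ ∀ t : ℝ, |t| ≤ T →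
      ‖iteratedDeriv n (logDeriv riemannZeta₁) (1 + t * I)‖ ≤ B := by
  have hcont : Continuous fun t : ℝ ↦ iteratedDeriv n (logDeriv riemannZeta₁) (1 + t * I) := by
    refine continuous_iff_continuousAt.2 fun t ↦ ?_
    have h := ((analyticAt_logDeriv_riemannZeta₁ (s := 1 + t * I) (by simp)).iterated_deriv
      n).continuousAt
    rw [← iteratedDeriv_eq_iterate] at h
    exact ContinuousAt.comp (f := fun t : ℝ ↦ (1 + t * I : ℂ)) h (by fun_prop)
  obtain ⟨B, hB⟩ := (isCompact_Icc (a := -T) (b := T)).exists_bound_of_continuousOn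
    hcont.continuousOn
  exact ⟨max B 1, by positivity, fun t ht ↦ (hB t (abs_le.1 ht)).trans (le_max_left _ _)⟩

lemma exists_norm_iteratedDeriv_logDeriv_riemannZeta_le_mul_inv_pow (n : ℕ) {T : ℝ} (hT : 0 < T) :
    ∃ A : ℝ, 0 < A ∧ ∀ t : ℝ, t ≠ 0 → |t| ≤ T →
      ‖iteratedDeriv n (logDeriv riemannZeta) (1 + t * I)‖ ≤ A * (1 / |t|) ^ (n + 1) := by
  obtain ⟨B, hB, hbound⟩ := exists_norm_iteratedDeriv_logDeriv_riemannZeta₁_le n T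
  refine ⟨B * T ^ (n + 1) + n.factorial, by positivity, fun t ht htT ↦ ?_⟩
  have ht0 : 0 < |t| := abs_pos.2 ht
  have hone : 1 ≤ T ^ (n + 1) * (1 / |t|) ^ (n + 1) := by
    rw [← mul_pow, mul_one_div]
    exact one_le_pow₀ ((one_le_div ht0).2 htT)
  have hpole : ‖(1 + t * I - 1 : ℂ)‖ = |t| := by simp
  rw [iteratedDeriv_logDeriv_riemannZeta_eq n (by simp) (by simpa)]
  calc _ ≤ B + n.factorial * (1 / |t|) ^ (n + 1) := by
        refine (norm_sub_le _ _).trans (add_le_add (hbound t htT) ?_)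
        rw [norm_iteratedDeriv_inv_sub, hpole]
    _ ≤ B * (T ^ (n + 1) * (1 / |t|) ^ (n + 1)) + n.factorial * (1 / |t|) ^ (n + 1) := by
        gcongr
        exact le_mul_of_one_le_right hB.le hone
    _ = (B * T ^ (n + 1) + n.factorial) * (1 / |t|) ^ (n + 1) := by ring

theorem exists_norm_iteratedDeriv_logDeriv_riemannZeta_le (n : ℕ) :
    ∃ A : ℝ, 0 < A ∧ ∀ t : ℝ, t ≠ 0 →
      ‖iteratedDeriv n (logDeriv riemannZeta) (1 + t * I)‖
        ≤ A * ((1 / |t|) ^ (n + 1) + Real.log (|t| + 2) ^ (n + 1)) := by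
  obtain ⟨A, hA, hsmall⟩ :=
    exists_norm_iteratedDeriv_logDeriv_riemannZeta_le_mul_inv_pow n two_pos
  obtain ⟨B, -, hlarge⟩ := exists_norm_iteratedDeriv_logDeriv_riemannZeta_le_mul_log_pow n
  refine ⟨max A B, by positivity, fun t ht ↦ ?_⟩
  have hlog : 0 < Real.log (|t| + 2) := Real.log_pos (by linarith [abs_nonneg t])
  rcases le_total |t| 2 with h | h
  · refine (hsmall t ht h).trans ?_
    gcongr
    exacts [le_max_left _ _, le_add_of_nonneg_right (by positivity)]
  · refine (hlarge t h).trans ?_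
    gcongr
    exacts [le_max_right _ _, le_add_of_nonneg_left (by positivity)]

end Taylor

/-- Let `t₀ ≠ 0` and `s₀ = 1 + 2it₀`. Then `ζ'/ζ` is analytic at `s₀` and, for every `n ≥ 0`,
its `n`-th Taylor coefficient `C_{n,s₀} = (ζ'/ζ)^{(n)}(s₀)/n!` satisfies
`|C_{n,s₀}| ≤ A_n (|t₀|^{-(n+1)} + (log(|t₀|+2))^{n+1})` with `A_n > 0` depending only on `n`. -/
theorem stmt_6 (n : ℕ) :
    ∃ A : ℝ, 0 < A ∧ ∀ t₀ : ℝ, t₀ ≠ 0 →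
      AnalyticAt ℂ (fun s => deriv riemannZeta s / riemannZeta s) (1 + 2 * t₀ * I) ∧
      ‖iteratedDeriv n (fun s => deriv riemannZeta s / riemannZeta s) (1 + 2 * t₀ * I) /
          (n.factorial : ℂ)‖
        ≤ A * ((1 / |t₀|) ^ (n + 1) + (Real.log (|t₀| + 2)) ^ (n + 1)) := by
  obtain ⟨A, hA, hbound⟩ := exists_norm_iteratedDeriv_logDeriv_riemannZeta_le n
  refine ⟨A * 2 ^ (n + 1), by positivity, fun t₀ ht₀ ↦ ⟨?_, ?_⟩⟩
  · have hzeta := analyticOn_riemannZeta (1 + 2 * t₀ * I) (by simpa)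
    exact hzeta.deriv.div hzeta (riemannZeta_ne_zero_of_one_le_re (by simp))
  have habs : |2 * t₀| = 2 * |t₀| := by rw [abs_mul, abs_two]
  have hinv : 1 / |2 * t₀| ≤ 2 * (1 / |t₀|) := by
    rw [habs, ← one_div_mul_one_div]
    gcongr
    norm_num
  have hlog := log_abs_add_two_le_two_mul habs.le
  have hlog_nonneg : 0 ≤ Real.log (|2 * t₀| + 2) :=
    Real.log_nonneg (by linarith [abs_nonneg (2 * t₀)])
  rw [norm_div, Complex.norm_natCast]
  calc _ ≤ ‖iteratedDeriv n (logDeriv riemannZeta) (1 + (2 * t₀ : ℝ) * I)‖ := by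
        push_cast
        exact div_le_self (norm_nonneg _) (mod_cast n.factorial_pos)
    _ ≤ A * ((1 / |2 * t₀|) ^ (n + 1) + Real.log (|2 * t₀| + 2) ^ (n + 1)) :=
        hbound _ (mul_ne_zero two_ne_zero ht₀)
    _ ≤ A * ((2 * (1 / |t₀|)) ^ (n + 1) + (2 * Real.log (|t₀| + 2)) ^ (n + 1)) := by gcongr
    _ = A * 2 ^ (n + 1) * ((1 / |t₀|) ^ (n + 1) + Real.log (|t₀| + 2) ^ (n + 1)) := by ring
end

section
/- Define the sequence (E_n)_{n≥0} by E_0 = −1 and E_n = (n−1)γ_{n−1} − Σ_{k=1}^{n} γ_{k−1} E_{n−k} for n ≥ 1, where γ_j are the Stieltjes constants. Then, in a neighbourhood of s = 1, one has the convergent power series expansion (s − 1) · ζ'(s)/ζ(s) = Σ_{n≥0} E_n (s − 1)^n. -/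
open Complex

/-
Near the pole write `ζ(s) = 1/w + g(s)` with `w = s - 1` and `g` the analytic function with Taylor
series `Γ = ∑ γₙ Xⁿ`. Clearing the pole from numerator and denominator gives
`w ζ'(s)/ζ(s) = (w² g'(s) - 1) / (1 + w g(s))`, whose denominator is `1` at the pole, so its
expansion is `(X² Γ' - 1) (1 + X Γ)⁻¹`. The recurrence for `E` is the coefficientwise form of
`(∑ Eₙ Xⁿ) (1 + X Γ) = X² Γ' - 1`.
-/

open Filter Topology PowerSeries

theorem eventually_nhdsNE_iff_norm_sub_lt {G : Type*} [SeminormedAddCommGroup G] {p : G → Prop}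
    {x : G} :
    (∀ᶠ y in 𝓝[≠] x, p y) ↔ ∃ r : ℝ, 0 < r ∧ ∀ y, y ≠ x → ‖y - x‖ < r → p y := by
  simp only [eventually_nhdsWithin_iff, Metric.eventually_nhds_iff, dist_eq_norm]
  grind

section Recurrence

variable {R : Type*} [CommRing R]

theorem mk_mul_one_add_X_mul_mk_of_recurrence {γ E : ℕ → R} (hE0 : E 0 = -1)
    (hE : ∀ n : ℕ, 1 ≤ n →
      E n = ((n : R) - 1) * γ (n - 1) - ∑ k ∈ Finset.Icc 1 n, γ (k - 1) * E (n - k)) :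
    mk E * (1 + X * mk γ) = X ^ 2 * d⁄dX R (mk γ) - 1 := by
  ext n
  rcases n with _ | n
  · simp [hE0]
  have hconv : coeff n (mk γ * mk E) = ∑ k ∈ Finset.Icc 1 (n + 1), γ (k - 1) * E (n + 1 - k) := by
    simp only [coeff_mul, coeff_mk]
    rw [Finset.Nat.sum_antidiagonal_eq_sum_range_succ fun i j ↦ γ i * E j,
      ← Finset.Ico_add_one_right_eq_Icc, Finset.sum_Ico_eq_sum_range]
    simp [add_comm 1]
  have hderiv : coeff (n + 1) (X ^ 2 * d⁄dX R (mk γ)) = n * γ n := by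
    rw [pow_two, mul_assoc, coeff_succ_X_mul]
    rcases n with _ | n
    · simp
    · simp [coeff_succ_X_mul, coeff_derivative, mul_comm]
  calc coeff (n + 1) (mk E * (1 + X * mk γ))
      = E (n + 1) + coeff n (mk γ * mk E) := by
        rw [show mk E * (1 + X * mk γ) = mk E + X * (mk γ * mk E) by ring, map_add, coeff_mk,
          coeff_succ_X_mul]
    _ = n * γ n := by
        rw [hconv, hE (n + 1) n.succ_pos]
        simp
    _ = coeff (n + 1) (X ^ 2 * d⁄dX R (mk γ) - 1) := by
        rw [map_sub, hderiv]
        simp [coeff_one]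

end Recurrence

section PowerSeriesExpansion

variable {𝕜 : Type*} [NontriviallyNormedField 𝕜] {f g : 𝕜 → 𝕜} {A B : 𝕜⟦X⟧} {z₀ : 𝕜}

/-- The formal power series `A`, evaluated at `z - z₀`, converges to `f z` for all `z` near `z₀`.
This is the one-variable form of `HasFPowerSeriesAt`, phrased through `PowerSeries` so that the
algebra of expansions becomes algebra in `𝕜⟦X⟧`. -/
def HasPowerSeriesAt (f : 𝕜 → 𝕜) (A : 𝕜⟦X⟧) (z₀ : 𝕜) : Prop :=
  ∀ᶠ z in 𝓝 z₀, HasSum (fun n ↦ coeff n A * (z - z₀) ^ n) (f z)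

theorem hasPowerSeriesAt_iff_hasFPowerSeriesAt :
    HasPowerSeriesAt f A z₀ ↔
      HasFPowerSeriesAt f (.ofScalars 𝕜 fun n ↦ coeff n A) z₀ := by
  simp only [HasPowerSeriesAt, hasFPowerSeriesAt_iff', FormalMultilinearSeries.coeff_ofScalars,
    smul_eq_mul, mul_comm]

theorem hasSum_coeff_mul_sub_self_pow (A : 𝕜⟦X⟧) (z₀ : 𝕜) :
    HasSum (fun n ↦ coeff n A * (z₀ - z₀) ^ n) (constantCoeff A) := by
  simpa using hasSum_single (f := fun n ↦ coeff n A * (z₀ - z₀) ^ n) 0 (by simp +contextual)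

theorem hasPowerSeriesAt_update_iff [DecidableEq 𝕜] :
    HasPowerSeriesAt (Function.update f z₀ (constantCoeff A)) A z₀ ↔
      ∀ᶠ z in 𝓝[≠] z₀, HasSum (fun n ↦ coeff n A * (z - z₀) ^ n) (f z) := by
  rw [HasPowerSeriesAt, eventually_nhdsWithin_iff]
  refine eventually_congr (.of_forall fun z ↦ ?_)
  by_cases hz : z = z₀
  · simpa [hz] using hasSum_coeff_mul_sub_self_pow A z₀
  · simp [hz]

theorem exists_hasPowerSeriesAt_of_analyticAt (hf : AnalyticAt 𝕜 f z₀) :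
    ∃ A, HasPowerSeriesAt f A z₀ := by
  obtain ⟨p, hp⟩ := hf
  refine ⟨mk p.coeff, ?_⟩
  simpa only [HasPowerSeriesAt, coeff_mk, mul_comm, smul_eq_mul] using hasFPowerSeriesAt_iff'.mp hp

namespace HasPowerSeriesAt

theorem analyticAt (hf : HasPowerSeriesAt f A z₀) : AnalyticAt 𝕜 f z₀ :=
  (hasPowerSeriesAt_iff_hasFPowerSeriesAt.mp hf).analyticAt

protected theorem unique (hA : HasPowerSeriesAt f A z₀) (hB : HasPowerSeriesAt f B z₀) : A = B := by
  have hAB := (hasPowerSeriesAt_iff_hasFPowerSeriesAt.mp hA).eq_formalMultilinearSeries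
    (hasPowerSeriesAt_iff_hasFPowerSeriesAt.mp hB)
  ext n
  exact congrFun (FormalMultilinearSeries.ofScalars_series_injective 𝕜 𝕜 hAB) n

protected theorem congr (hf : HasPowerSeriesAt f A z₀) (hfg : f =ᶠ[𝓝 z₀] g) :
    HasPowerSeriesAt g A z₀ := by
  filter_upwards [hf, hfg] with z hz hfgz using hfgz ▸ hz

theorem apply_center (hf : HasPowerSeriesAt f A z₀) : f z₀ = constantCoeff A :=
  hf.self_of_nhds.unique (hasSum_coeff_mul_sub_self_pow A z₀)

theorem eventually_summable_norm (hf : HasPowerSeriesAt f A z₀) :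
    ∀ᶠ z in 𝓝 z₀, Summable fun n ↦ ‖coeff n A * (z - z₀) ^ n‖ := by
  set p := FormalMultilinearSeries.ofScalars 𝕜 fun n ↦ coeff n A with hp
  have hradius : 0 < p.radius := (hasPowerSeriesAt_iff_hasFPowerSeriesAt.mp hf).radius_pos
  filter_upwards [Metric.eball_mem_nhds z₀ hradius] with z hz
  have hmem : z - z₀ ∈ Metric.eball 0 p.radius := by simpa [edist_eq_enorm_sub] using hz
  refine (p.summable_norm_apply hmem).congr fun n ↦ ?_
  rw [hp, FormalMultilinearSeries.ofScalars_apply_eq, smul_eq_mul]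

protected theorem const (c : 𝕜) : HasPowerSeriesAt (fun _ ↦ c) (C c) z₀ := by
  refine .of_forall fun z ↦ ?_
  simpa using hasSum_single (f := fun n ↦ coeff n (C c) * (z - z₀) ^ n) 0
    (by simp +contextual [coeff_C])

theorem sub_center : HasPowerSeriesAt (fun z ↦ z - z₀) X z₀ := by
  refine .of_forall fun z ↦ ?_
  simpa using hasSum_single (f := fun n ↦ coeff n X * (z - z₀) ^ n) 1
    (by simp +contextual [coeff_X])

protected theorem add (hf : HasPowerSeriesAt f A z₀) (hg : HasPowerSeriesAt g B z₀) :
    HasPowerSeriesAt (fun z ↦ f z + g z) (A + B) z₀ := by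
  filter_upwards [hf, hg] with z hfz hgz
  simpa [add_mul] using hfz.add hgz

protected theorem sub (hf : HasPowerSeriesAt f A z₀) (hg : HasPowerSeriesAt g B z₀) :
    HasPowerSeriesAt (fun z ↦ f z - g z) (A - B) z₀ := by
  filter_upwards [hf, hg] with z hfz hgz
  simpa [sub_mul] using hfz.sub hgz

variable [CompleteSpace 𝕜]

theorem eventually_differentiableAt (hf : HasPowerSeriesAt f A z₀) :
    ∀ᶠ z in 𝓝 z₀, DifferentiableAt 𝕜 f z :=
  hf.analyticAt.eventually_analyticAt.mono fun _ hz ↦ hz.differentiableAt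

protected theorem mul (hf : HasPowerSeriesAt f A z₀) (hg : HasPowerSeriesAt g B z₀) :
    HasPowerSeriesAt (fun z ↦ f z * g z) (A * B) z₀ := by
  filter_upwards [hf, hg, hf.eventually_summable_norm, hg.eventually_summable_norm]
    with z hfz hgz hAz hBz
  have hcauchy (n : ℕ) : coeff n (A * B) * (z - z₀) ^ n =
      ∑ kl ∈ Finset.HasAntidiagonal.antidiagonal n,
        coeff kl.1 A * (z - z₀) ^ kl.1 * (coeff kl.2 B * (z - z₀) ^ kl.2) := by
    rw [coeff_mul, Finset.sum_mul]
    refine Finset.sum_congr rfl fun kl hkl ↦ ?_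
    rw [← Finset.HasAntidiagonal.mem_antidiagonal.mp hkl]
    ring
  simp only [hcauchy]
  rw [← hfz.tsum_eq, ← hgz.tsum_eq,
    tsum_mul_tsum_eq_tsum_sum_antidiagonal_of_summable_norm hAz hBz]
  exact (summable_norm_sum_mul_antidiagonal_of_summable_norm hAz hBz).of_norm.hasSum

protected theorem deriv (hf : HasPowerSeriesAt f A z₀) :
    HasPowerSeriesAt (deriv f) (d⁄dX 𝕜 A) z₀ := by
  obtain ⟨r, hp⟩ := hasPowerSeriesAt_iff_hasFPowerSeriesAt.mp hf
  have hp' := ((ContinuousLinearMap.apply 𝕜 𝕜 (1 : 𝕜)).comp_hasFPowerSeriesOnBall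
    hp.fderiv).hasFPowerSeriesAt
  rw [hasFPowerSeriesAt_iff'] at hp'
  filter_upwards [hp'] with z hz
  convert! hz using 2 with n
  have hcomp : (((ContinuousLinearMap.apply 𝕜 𝕜) 1).compFormalMultilinearSeries
      (FormalMultilinearSeries.ofScalars 𝕜 fun n ↦ coeff n A).derivSeries).coeff n =
      (FormalMultilinearSeries.ofScalars 𝕜 fun n ↦ coeff n A).derivSeries.coeff n 1 := rfl
  rw [hcomp, FormalMultilinearSeries.derivSeries_coeff_one, coeff_derivative]
  simp only [FormalMultilinearSeries.coeff_ofScalars, nsmul_eq_mul, smul_eq_mul]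
  push_cast
  ring

protected theorem inv (hf : HasPowerSeriesAt f A z₀) (hA : constantCoeff A ≠ 0) :
    HasPowerSeriesAt (fun z ↦ (f z)⁻¹) A⁻¹ z₀ := by
  have hf₀ : f z₀ ≠ 0 := hf.apply_center ▸ hA
  obtain ⟨B, hB⟩ := exists_hasPowerSeriesAt_of_analyticAt (hf.analyticAt.inv hf₀)
  have hone : HasPowerSeriesAt (fun z ↦ (f z)⁻¹ * f z) 1 z₀ := by
    rw [← map_one C]
    refine (HasPowerSeriesAt.const (1 : 𝕜)).congr ?_
    filter_upwards [hf.analyticAt.continuousAt.eventually_ne hf₀] with z hz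
    exact (inv_mul_cancel₀ hz).symm
  have hBA : B = A⁻¹ := (PowerSeries.eq_inv_iff_mul_eq_one hA).mpr ((hB.mul hf).unique hone)
  exact hBA ▸ hB

protected theorem div (hf : HasPowerSeriesAt f A z₀) (hg : HasPowerSeriesAt g B z₀)
    (hB : constantCoeff B ≠ 0) : HasPowerSeriesAt (fun z ↦ f z / g z) (A * B⁻¹) z₀ := by
  simpa only [div_eq_mul_inv] using hf.mul (hg.inv hB)

end HasPowerSeriesAt

theorem deriv_eventuallyEq_neg_inv_sq_add_deriv
    (hg : ∀ᶠ s in 𝓝[≠] z₀, DifferentiableAt 𝕜 g s)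
    (hfg : f =ᶠ[𝓝[≠] z₀] fun s ↦ (s - z₀)⁻¹ + g s) :
    deriv f =ᶠ[𝓝[≠] z₀] fun s ↦ -1 / (s - z₀) ^ 2 + deriv g s := by
  filter_upwards [hg, hfg.nhdsNE_deriv, self_mem_nhdsWithin]
    with s hgs hfgs (hs : s ≠ z₀)
  have hinv : HasDerivAt (fun s ↦ (s - z₀)⁻¹) (-1 / (s - z₀) ^ 2) s :=
    ((hasDerivAt_id s).sub_const z₀).inv (sub_ne_zero.mpr hs)
  exact hfgs.trans (hinv.add hgs.hasDerivAt).deriv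

theorem sub_mul_deriv_div_eventuallyEq (hg : ∀ᶠ s in 𝓝[≠] z₀, DifferentiableAt 𝕜 g s)
    (hfg : f =ᶠ[𝓝[≠] z₀] fun s ↦ (s - z₀)⁻¹ + g s) :
    (fun s ↦ (s - z₀) * (deriv f s / f s)) =ᶠ[𝓝[≠] z₀]
      fun s ↦ ((s - z₀) ^ 2 * deriv g s - 1) / (1 + (s - z₀) * g s) := by
  filter_upwards [hfg, deriv_eventuallyEq_neg_inv_sq_add_deriv hg hfg, self_mem_nhdsWithin]
    with s hfs hderiv (hs : s ≠ z₀)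
  have hw : s - z₀ ≠ 0 := sub_ne_zero.mpr hs
  calc (s - z₀) * (deriv f s / f s)
      = ((s - z₀) ^ 2 * deriv f s) / ((s - z₀) * f s) := by
        rw [pow_two, mul_assoc, mul_div_mul_left _ _ hw, mul_div_assoc]
    _ = ((s - z₀) ^ 2 * deriv g s - 1) / (1 + (s - z₀) * g s) := by
        rw [hfs, hderiv]
        congr 1
        · field_simp
          ring
        · field_simp

end PowerSeriesExpansion

theorem stmt_7_general {𝕜 : Type*} [NontriviallyNormedField 𝕜] [CompleteSpace 𝕜]
    (f : 𝕜 → 𝕜) (z₀ : 𝕜) (γ : ℕ → 𝕜)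
    (hγ : ∀ᶠ s in 𝓝[≠] z₀, HasSum (fun n ↦ γ n * (s - z₀) ^ n) (f s - 1 / (s - z₀)))
    (E : ℕ → 𝕜) (hE0 : E 0 = -1)
    (hE : ∀ n : ℕ, 1 ≤ n →
      E n = ((n : 𝕜) - 1) * γ (n - 1) - ∑ k ∈ Finset.Icc 1 n, γ (k - 1) * E (n - k)) :
    ∀ᶠ s in 𝓝[≠] z₀,
      HasSum (fun n ↦ E n * (s - z₀) ^ n) ((s - z₀) * (deriv f s / f s)) := by
  classical
  set g := Function.update (fun s ↦ f s - 1 / (s - z₀)) z₀ (constantCoeff (mk γ))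
  have hg : HasPowerSeriesAt g (mk γ) z₀ :=
    hasPowerSeriesAt_update_iff.mpr (by simpa only [coeff_mk] using hγ)
  have hfg : f =ᶠ[𝓝[≠] z₀] fun s ↦ (s - z₀)⁻¹ + g s := by
    filter_upwards [self_mem_nhdsWithin] with s (hs : s ≠ z₀)
    simp [g, hs]
  have hw : HasPowerSeriesAt (fun s ↦ s - z₀) X z₀ := .sub_center
  have hone : HasPowerSeriesAt (fun _ ↦ (1 : 𝕜)) 1 z₀ := by
    simpa only [map_one] using HasPowerSeriesAt.const (z₀ := z₀) (1 : 𝕜)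
  have hunit : constantCoeff (1 + X * mk γ) ≠ 0 := by simp
  have hquot := (((hw.mul hw).mul hg.deriv).sub hone).div (hone.add (hw.mul hg)) hunit
  have hseries : mk E = (X * X * d⁄dX 𝕜 (mk γ) - 1) * (1 + X * mk γ)⁻¹ := by
    rw [PowerSeries.eq_mul_inv_iff_mul_eq hunit, ← pow_two,
      mk_mul_one_add_X_mul_mk_of_recurrence hE0 hE]
  have hgd : ∀ᶠ s in 𝓝[≠] z₀, DifferentiableAt 𝕜 g s :=
    hg.eventually_differentiableAt.filter_mono nhdsWithin_le_nhds
  filter_upwards [hquot.filter_mono nhdsWithin_le_nhds, sub_mul_deriv_div_eventuallyEq hgd hfg]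
    with s hsum hs
  simpa only [hs, ← hseries, coeff_mk, pow_two] using hsum

/-- Suppose `γ : ℕ → ℂ` is the sequence of Stieltjes constants, characterized by the Laurent
expansion `ζ(s) = 1/(s−1) + Σ_{n≥0} γ_n (s−1)^n` valid in some punctured neighbourhood of `1`.
Define `E 0 = −1` and `E n = (n−1)γ_{n−1} − Σ_{k=1}^{n} γ_{k−1} E_{n−k}` for `n ≥ 1`. Then in
some punctured neighbourhood of `1` one has the convergent power series expansion
`(s − 1) ζ'(s)/ζ(s) = Σ_{n≥0} E_n (s−1)^n`. -/
theorem stmt_7 (γ : ℕ → ℂ)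
    (hγ : ∃ r : ℝ, 0 < r ∧ ∀ s : ℂ, s ≠ 1 → ‖s - 1‖ < r →
      HasSum (fun n : ℕ => γ n * (s - 1) ^ n) (riemannZeta s - 1 / (s - 1)))
    (E : ℕ → ℂ) (hE0 : E 0 = -1)
    (hE : ∀ n : ℕ, 1 ≤ n →
      E n = ((n : ℂ) - 1) * γ (n - 1) - ∑ k ∈ Finset.Icc 1 n, γ (k - 1) * E (n - k)) :
    ∃ r : ℝ, 0 < r ∧ ∀ s : ℂ, s ≠ 1 → ‖s - 1‖ < r →
      HasSum (fun n : ℕ => E n * (s - 1) ^ n)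
        ((s - 1) * (deriv riemannZeta s / riemannZeta s)) :=
  eventually_nhdsNE_iff_norm_sub_lt.mp <|
    stmt_7_general riemannZeta 1 γ (eventually_nhdsNE_iff_norm_sub_lt.mpr hγ) E hE0 hE
end

section
/- Define the sequence (μ_j)_{j ≥ 0} by μ_0 = 1 and μ_j = Σ_{m ≥ 1} Λ_j(m)² / m² for j ≥ 1. Then for every integer k ≥ 0, the Hankel determinants det(μ_{i+j})_{i,j=0}^{k} and det(μ_{i+j+1})_{i,j=0}^{k} are both nonnegative. -/
/-- `Lam j m` is the `j`-fold Dirichlet convolution of the von Mangoldt function with itself,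
evaluated at `m`, i.e. `Λ_j(m) = Σ_{m = m₁⋯m_j} Λ(m₁)⋯Λ(m_j)`. -/
noncomputable def Lam (j m : ℕ) : ℝ := (ArithmeticFunction.vonMangoldt ^ j) m

/-- The moment sequence: `μ 0 = 1` and `μ j = Σ_{m ≥ 1} Λ_j(m)²/m²` for `j ≥ 1`. -/
noncomputable def momSeq (j : ℕ) : ℝ :=
  if j = 0 then 1 else ∑' m : ℕ, (Lam j m) ^ 2 / (m : ℝ) ^ 2

/-!
Write `F(s) = ∑ f(n) n⁻ˢ` for a nonnegative arithmetic function `f`, and `F*` for its complex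
conjugate. Formally, the Hankel entry `∑ f^{i+j+e}(n)²` is the mean value of `|F(it)|^{2(i+j+e)}`,
that is, the inner product of the almost periodic functions `F^{i+e} F*^i` and `F^{j+e} F*^j`.
Such a function is determined by its coefficients at the frequencies `log q` with `q` a positive
rational: the coefficient of `F G*` at `log q` is `∑_{a/b=q} f(a) g(b)`. The inner product identity
then holds termwise, because `a/b = c/d` is the same condition as `ad = cb`. So the Hankel matrices
are Gram matrices in `ℓ²(ℚ≥0)`, as soon as their diagonal entries are finite; for
`f(n) = Λ(n)/n` this follows from `Λ_j(n) ≤ (log n)ʲ`.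
-/

open ArithmeticFunction Asymptotics Filter
open scoped ENNReal NNRat

section FiberSum

variable {α β γ : Type*} [DecidableEq γ]

/-- The pushforward of a weight `w` along `π`: its total mass on each fibre of `π`. Dirichlet
convolutions and ratio correlations are both of this form. -/
noncomputable def fiberSum (π : α → γ) (w : α → ℝ≥0∞) (c : γ) : ℝ≥0∞ :=
  ∑' a, if π a = c then w a else 0

lemma tsum_fiberSum_mul_fiberSum (π : α → γ) (ρ : β → γ) (w : α → ℝ≥0∞) (u : β → ℝ≥0∞) :
    ∑' c, fiberSum π w c * fiberSum ρ u c =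
      ∑' p : α × β, if π p.1 = ρ p.2 then w p.1 * u p.2 else 0 := by
  calc ∑' c, fiberSum π w c * fiberSum ρ u c
      = ∑' c, ∑' p : α × β, (if π p.1 = c then w p.1 else 0) * if ρ p.2 = c then u p.2 else 0 := by
        simp only [fiberSum, ENNReal.tsum_prod', ENNReal.tsum_mul_left, ENNReal.tsum_mul_right]
    _ = ∑' p : α × β, ∑' c, (if π p.1 = c then w p.1 else 0) * if ρ p.2 = c then u p.2 else 0 :=
        ENNReal.tsum_comm
    _ = ∑' p : α × β, if π p.1 = ρ p.2 then w p.1 * u p.2 else 0 := by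
        simp only [mul_ite, mul_zero, ite_mul, zero_mul, tsum_ite_eq, eq_comm (a := ρ _)]

end FiberSum

lemma dirichletMul_apply_eq_fiberSum (f g : ArithmeticFunction ℝ≥0∞) (n : ℕ) :
    (f * g) n = fiberSum (fun p : ℕ × ℕ => p.1 * p.2) (fun p => f p.1 * g p.2) n := by
  rw [mul_apply, fiberSum, tsum_eq_sum (s := n.divisorsAntidiagonal)]
  · refine Finset.sum_congr rfl fun p hp => ?_
    rw [if_pos (Nat.mem_divisorsAntidiagonal.mp hp).1]
  · intro p hp
    rw [ite_eq_right_iff]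
    rintro rfl
    have h : p.1 = 0 ∨ p.2 = 0 := by simpa [or_iff_not_imp_left] using hp
    rcases h with h | h <;> simp [h]

/-- The total weight `∑ f(a) g(b)` of the representations `q = a / b`, i.e. the coefficient of
`q^{-it}` in the product of the Dirichlet series of `f` and the conjugate of that of `g` at `it`.
Pairs with `b = 0` are harmless, since `g 0 = 0`. -/
noncomputable def ratioCorrelation (f g : ArithmeticFunction ℝ≥0∞) : ℚ≥0 → ℝ≥0∞ :=
  fiberSum (fun p : ℕ × ℕ => (p.1 / p.2 : ℚ≥0)) fun p => f p.1 * g p.2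

lemma tsum_ratioCorrelation_mul_ratioCorrelation (f g h k : ArithmeticFunction ℝ≥0∞) :
    ∑' q, ratioCorrelation f g q * ratioCorrelation h k q = ∑' n, (f * k) n * (h * g) n := by
  simp only [ratioCorrelation, dirichletMul_apply_eq_fiberSum, tsum_fiberSum_mul_fiberSum]
  let swapDenominators : (ℕ × ℕ) × ℕ × ℕ ≃ (ℕ × ℕ) × ℕ × ℕ :=
    { toFun := fun p => ((p.1.1, p.2.2), (p.2.1, p.1.2))
      invFun := fun p => ((p.1.1, p.2.2), (p.2.1, p.1.2))
      left_inv := fun _ => rfl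
      right_inv := fun _ => rfl }
  rw [← swapDenominators.tsum_eq]
  refine tsum_congr fun ((a, d), (c, b)) => ?_
  change (if (a / b : ℚ≥0) = c / d then f a * g b * (h c * k d) else 0) =
    if a * d = c * b then f a * k d * (h c * g b) else 0
  rcases eq_or_ne b 0 with rfl | hb
  · simp
  rcases eq_or_ne d 0 with rfl | hd
  · simp
  have hratio : (a / b : ℚ≥0) = c / d ↔ a * d = c * b := by
    rw [div_eq_div_iff (by exact_mod_cast hb) (by exact_mod_cast hd)]
    exact_mod_cast Iff.rfl
  have hweight : f a * g b * (h c * k d) = f a * k d * (h c * g b) := by ring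
  rw [hweight]
  exact if_congr hratio rfl rfl

section Gram

variable {ι : Type*} [Finite ι]

lemma posSemidef_toReal_tsum_mul {α : Type*} (v : ι → α → ℝ≥0∞)
    (hv : ∀ i, ∑' a, v i a ^ 2 ≠ ∞) :
    (Matrix.of fun i j => (∑' a, v i a * v j a).toReal).PosSemidef := by
  have hv_ne_top (i : ι) (a : α) : v i a ≠ ∞ := fun h =>
    ENNReal.ne_top_of_tsum_ne_top (hv i) a (by simp [h])
  have hmem (i : ι) : Memℓp (fun a => (v i a).toReal) 2 := by
    refine memℓp_gen ?_
    simpa using ENNReal.summable_toReal (hv i)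
  let V (i : ι) : lp (fun _ : α => ℝ) 2 := ⟨fun a => (v i a).toReal, hmem i⟩
  suffices h : (Matrix.of fun i j => (∑' a, v i a * v j a).toReal) = Matrix.gram ℝ V from
    h ▸ Matrix.posSemidef_gram ℝ V
  ext i j
  rw [Matrix.of_apply, Matrix.gram_apply, lp.inner_eq_tsum,
    ENNReal.tsum_toReal_eq fun a => ENNReal.mul_ne_top (hv_ne_top i a) (hv_ne_top j a)]
  simp [V, mul_comm]

lemma posSemidef_tsum_mul_mul_swap (g h : ι → ArithmeticFunction ℝ≥0∞)
    (hgh : ∀ i, ∑' n, (g i * h i) n ^ 2 ≠ ∞) :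
    (Matrix.of fun i j => (∑' n, (g i * h j) n * (g j * h i) n).toReal).PosSemidef := by
  simp only [← tsum_ratioCorrelation_mul_ratioCorrelation]
  refine posSemidef_toReal_tsum_mul (fun i => ratioCorrelation (g i) (h i)) fun i => ?_
  simpa only [sq, tsum_ratioCorrelation_mul_ratioCorrelation] using hgh i

lemma posSemidef_hankel_tsum_pow_sq (f : ArithmeticFunction ℝ≥0∞)
    (hf : ∀ j, ∑' n, (f ^ j) n ^ 2 ≠ ∞) (d : ι → ℕ) (e : ℕ) :
    (Matrix.of fun i j => (∑' n, (f ^ (d i + d j + e)) n ^ 2).toReal).PosSemidef := by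
  have hpow (i j : ι) : f ^ (d i + e) * f ^ d j = f ^ (d i + d j + e) := by
    rw [← pow_add, add_right_comm]
  have hentry (i j : ι) (n : ℕ) :
      (f ^ (d i + e) * f ^ d j) n * (f ^ (d j + e) * f ^ d i) n = (f ^ (d i + d j + e)) n ^ 2 := by
    rw [hpow, hpow, add_comm (d j), sq]
  simpa only [hentry] using
    posSemidef_tsum_mul_mul_swap (fun i => f ^ (d i + e)) (fun i => f ^ d i)
      fun i => by simpa only [hpow] using hf _

end Gram

lemma Lam_succ (j m : ℕ) :
    Lam (j + 1) m = ∑ p ∈ m.divisorsAntidiagonal, Lam j p.1 * vonMangoldt p.2 := by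
  rw [Lam, pow_succ, mul_apply]
  rfl

lemma Lam_zero (m : ℕ) : Lam 0 m = if m = 1 then 1 else 0 := by
  rw [Lam, pow_zero, one_apply]

lemma Lam_nonneg (j m : ℕ) : 0 ≤ Lam j m := by
  induction j generalizing m with
  | zero => rw [Lam_zero]; positivity
  | succ j ih =>
    rw [Lam_succ]
    exact Finset.sum_nonneg fun p _ => mul_nonneg (ih _) vonMangoldt_nonneg

lemma Lam_le_log_pow (j m : ℕ) : Lam j m ≤ Real.log m ^ j := by
  induction j generalizing m with
  | zero => rw [Lam_zero, pow_zero]; split_ifs <;> norm_num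
  | succ j ih =>
    have hLam_le (p : ℕ × ℕ) (hp : p ∈ m.divisorsAntidiagonal) :
        Lam j p.1 ≤ Real.log m ^ j := by
      have hdiv : p.1 ∈ m.divisors := Nat.fst_mem_divisors_of_mem_antidiagonal hp
      have hpos : (0 : ℝ) < p.1 := by exact_mod_cast Nat.pos_of_mem_divisors hdiv
      have hle : (p.1 : ℝ) ≤ m := by exact_mod_cast Nat.divisor_le hdiv
      exact (ih p.1).trans <|
        pow_le_pow_left₀ (Real.log_natCast_nonneg p.1) (Real.log_le_log hpos hle) j
    calc Lam (j + 1) m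
        = ∑ p ∈ m.divisorsAntidiagonal, Lam j p.1 * vonMangoldt p.2 := Lam_succ j m
      _ ≤ ∑ p ∈ m.divisorsAntidiagonal, Real.log m ^ j * vonMangoldt p.2 := by
          gcongr with p hp
          exact hLam_le p hp
      _ = Real.log m ^ (j + 1) := by
          rw [← Finset.mul_sum, Nat.sum_divisorsAntidiagonal' fun _ i => vonMangoldt i,
            vonMangoldt_sum, pow_succ]

lemma summable_log_pow_div_sq (k : ℕ) : Summable fun n : ℕ => Real.log n ^ k / (n : ℝ) ^ 2 := by
  have hlog : (fun n : ℕ => Real.log n ^ k) =O[atTop] fun n : ℕ => (n : ℝ) ^ (1 / 2 : ℝ) := by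
    simpa only [Function.comp_def, Real.rpow_natCast] using
      (isLittleO_log_rpow_rpow_atTop (k : ℝ) one_half_pos).isBigO.comp_tendsto
        tendsto_natCast_atTop_atTop
  refine summable_of_isBigO_nat (Real.summable_nat_rpow.mpr (by norm_num : (-(3 / 2) : ℝ) < -1)) ?_
  refine (hlog.mul (isBigO_refl (fun n : ℕ => ((n : ℝ) ^ 2)⁻¹) atTop)).congr' (by rfl) ?_
  filter_upwards [eventually_gt_atTop 0] with n hn
  have hn' : (0 : ℝ) < n := by exact_mod_cast hn
  rw [← Real.rpow_natCast, ← Real.rpow_neg hn'.le, ← Real.rpow_add hn']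
  norm_num

lemma summable_Lam_sq_div_sq (j : ℕ) : Summable fun m : ℕ => Lam j m ^ 2 / (m : ℝ) ^ 2 := by
  refine (summable_log_pow_div_sq (j * 2)).of_nonneg_of_le (fun m => by positivity) fun m => ?_
  rw [pow_mul]
  gcongr
  · exact Lam_nonneg j m
  · exact Lam_le_log_pow j m

/-- The arithmetic function `n ↦ Λ(n) / n`, valued in `ℝ≥0∞` so that its convolution powers can be
summed without convergence conditions. -/
noncomputable def vonMangoldtDiv : ArithmeticFunction ℝ≥0∞ :=
  ⟨fun n => .ofReal (vonMangoldt n / n), by simp⟩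

lemma vonMangoldtDiv_pow_apply (j m : ℕ) :
    (vonMangoldtDiv ^ j) m = .ofReal (Lam j m / m) := by
  induction j generalizing m with
  | zero =>
    rw [pow_zero, one_apply, Lam_zero]
    split_ifs with hm <;> simp [hm]
  | succ j ih =>
    have hnonneg (p : ℕ × ℕ) : 0 ≤ Lam j p.1 / p.1 := div_nonneg (Lam_nonneg _ _) p.1.cast_nonneg
    rw [pow_succ, mul_apply, Lam_succ, Finset.sum_div, ENNReal.ofReal_sum_of_nonneg]
    · refine Finset.sum_congr rfl fun p hp => ?_
      rw [ih, vonMangoldtDiv, coe_mk, ← ENNReal.ofReal_mul (hnonneg p), div_mul_div_comm,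
        ← (Nat.mem_divisorsAntidiagonal.mp hp).1, Nat.cast_mul]
    · exact fun p _ => div_nonneg (mul_nonneg (Lam_nonneg _ _) vonMangoldt_nonneg) m.cast_nonneg

lemma vonMangoldtDiv_pow_apply_sq (j m : ℕ) :
    (vonMangoldtDiv ^ j) m ^ 2 = .ofReal (Lam j m ^ 2 / (m : ℝ) ^ 2) := by
  rw [vonMangoldtDiv_pow_apply, ← ENNReal.ofReal_pow (div_nonneg (Lam_nonneg j m) m.cast_nonneg),
    div_pow]

lemma tsum_vonMangoldtDiv_pow_sq_ne_top (j : ℕ) : ∑' n, (vonMangoldtDiv ^ j) n ^ 2 ≠ ∞ := by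
  simpa only [vonMangoldtDiv_pow_apply_sq] using (summable_Lam_sq_div_sq j).tsum_ofReal_ne_top

lemma momSeq_eq_tsum (j : ℕ) : momSeq j = ∑' m : ℕ, Lam j m ^ 2 / (m : ℝ) ^ 2 := by
  rw [momSeq, ite_eq_right_iff]
  rintro rfl
  rw [tsum_eq_single 1 fun m hm => by simp [Lam_zero, hm]]
  simp [Lam_zero]

lemma momSeq_eq_toReal_tsum (j : ℕ) :
    momSeq j = (∑' n, (vonMangoldtDiv ^ j) n ^ 2).toReal := by
  simp only [vonMangoldtDiv_pow_apply_sq]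
  rw [momSeq_eq_tsum, ENNReal.tsum_toReal_eq fun _ => ENNReal.ofReal_ne_top]
  exact tsum_congr fun m => (ENNReal.toReal_ofReal (by positivity)).symm

lemma posSemidef_hankel_momSeq {ι : Type*} [Finite ι] (d : ι → ℕ) (e : ℕ) :
    (Matrix.of fun i j => momSeq (d i + d j + e)).PosSemidef := by
  simp only [momSeq_eq_toReal_tsum]
  exact posSemidef_hankel_tsum_pow_sq _ tsum_vonMangoldtDiv_pow_sq_ne_top d e

/-- For every `k ≥ 0`, the Hankel determinants `det(μ_{i+j})_{i,j=0}^k` and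
`det(μ_{i+j+1})_{i,j=0}^k` of the moment sequence are nonnegative. -/
theorem stmt_17 (k : ℕ) :
    0 ≤ Matrix.det (Matrix.of fun i j : Fin (k + 1) => momSeq ((i : ℕ) + (j : ℕ))) ∧
      0 ≤ Matrix.det (Matrix.of fun i j : Fin (k + 1) => momSeq ((i : ℕ) + (j : ℕ) + 1)) :=
  ⟨(posSemidef_hankel_momSeq Fin.val 0).det_nonneg, (posSemidef_hankel_momSeq Fin.val 1).det_nonneg⟩
end
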